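/- Let λ0 ∈ ℝ, let g be an exchangeable prior, and let d be a pseudo symmetric design with c_{d22} > 0, q_d(x_d) > 0 and q_d(λ0) > 0. Then d is D_{g,λ0}-optimal if and only if max_{s∈S} [ (1/(t−1)) q_s(x_d)/q_d(x_d) + ((t−2)/(t−1)) q_s(λ0)/q_d(λ0) ] = 1. Moreover, in that case every sequence s with p_s > 0 attains this maximum. -/

import Mathlib

open Matrix MeasureTheory
open scoped Classical

noncomputable section

/-- A treatment sequence: assigns a treatment in `Fin t` to each period in `Fin p`. -/
abbrev TrtSeq (p t : ℕ) := Fin p → Fin t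

/-- Treatment/period incidence matrix `T_s`. -/
def Tmat {p t : ℕ} (s : TrtSeq p t) : Matrix (Fin p) (Fin t) ℝ :=
  Matrix.of fun k i => if s k = i then 1 else 0

/-- Carryover incidence matrix `F_s`: first row zero, row `k` records the treatment
in period `k-1`. -/
def Fmat {p t : ℕ} (s : TrtSeq p t) : Matrix (Fin p) (Fin t) ℝ :=
  Matrix.of fun k i =>
    if (k : ℕ) = 0 then 0
    else if s ⟨(k : ℕ) - 1, Nat.lt_of_le_of_lt (Nat.sub_le _ _) k.isLt⟩ = i then 1 else 0

/-- The all-ones `m × m` matrix `J_m`. -/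
def Jmat (m : ℕ) : Matrix (Fin m) (Fin m) ℝ := Matrix.of fun _ _ => 1

/-- `B_t = I_t - J_t / t`. -/
def Bmat (t : ℕ) : Matrix (Fin t) (Fin t) ℝ := 1 - ((t : ℝ))⁻¹ • Jmat t

/-- `B̃ = Σ⁻¹ - Σ⁻¹ J_p Σ⁻¹ / (1_p' Σ⁻¹ 1_p)`. -/
def Btil {p : ℕ} (S : Matrix (Fin p) (Fin p) ℝ) : Matrix (Fin p) (Fin p) ℝ :=
  S⁻¹ - (((fun _ => (1 : ℝ)) : Fin p → ℝ) ⬝ᵥ (S⁻¹ *ᵥ fun _ => (1 : ℝ)))⁻¹ •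
    (S⁻¹ * Jmat p * S⁻¹)

/-- `G_1(s) = T_s`, `G_2(s) = F_s`. -/
def Gmat {p t : ℕ} (i : Fin 2) (s : TrtSeq p t) : Matrix (Fin p) (Fin t) ℝ :=
  if i = 0 then Tmat s else Fmat s

/-- An approximate design: nonnegative weights summing to one. -/
def IsDesign {p t : ℕ} (w : TrtSeq p t → ℝ) : Prop :=
  (∀ s, 0 ≤ w s) ∧ ∑ s : TrtSeq p t, w s = 1

/-- `Ĉ_{sij} = B_t G_i(s)' B̃ G_j(s) B_t`. -/
def Chat {p t : ℕ} (S : Matrix (Fin p) (Fin p) ℝ) (s : TrtSeq p t) (i j : Fin 2) :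
    Matrix (Fin t) (Fin t) ℝ :=
  Bmat t * (Gmat i s)ᵀ * Btil S * Gmat j s * Bmat t

/-- `c_{sij} = tr Ĉ_{sij}`. -/
def cseq {p t : ℕ} (S : Matrix (Fin p) (Fin p) ℝ) (s : TrtSeq p t) (i j : Fin 2) : ℝ :=
  (Chat S s i j).trace

/-- `Ĉ_{dij} = n ∑_s p_s Ĉ_{sij}`. -/
def ChatD {p t : ℕ} (n : ℕ) (S : Matrix (Fin p) (Fin p) ℝ) (w : TrtSeq p t → ℝ)
    (i j : Fin 2) : Matrix (Fin t) (Fin t) ℝ :=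
  (n : ℝ) • ∑ s : TrtSeq p t, w s • Chat S s i j

/-- `C_{dij} = Ĉ_{dij} - n (∑_s p_s G_i(s) B_t)' B̃ (∑_s p_s G_j(s) B_t)`. -/
def CD {p t : ℕ} (n : ℕ) (S : Matrix (Fin p) (Fin p) ℝ) (w : TrtSeq p t → ℝ)
    (i j : Fin 2) : Matrix (Fin t) (Fin t) ℝ :=
  ChatD n S w i j -
    (n : ℝ) • ((∑ s : TrtSeq p t, w s • (Gmat i s * Bmat t))ᵀ * Btil S *
      (∑ s : TrtSeq p t, w s • (Gmat j s * Bmat t)))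

/-- `c_{dij} = tr Ĉ_{dij} = n ∑_s p_s c_{sij}`. -/
def cD {p t : ℕ} (n : ℕ) (S : Matrix (Fin p) (Fin p) ℝ) (w : TrtSeq p t → ℝ)
    (i j : Fin 2) : ℝ :=
  (ChatD n S w i j).trace

/-- Fisher information matrix `C_{d,τ0,λ0}` for the direct treatment effects under the
proportional model. -/
def CInfo {p t : ℕ} (n : ℕ) (S : Matrix (Fin p) (Fin p) ℝ) (w : TrtSeq p t → ℝ)
    (τ0 : Fin t → ℝ) (l0 : ℝ) : Matrix (Fin t) (Fin t) ℝ :=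
  CD n S w 0 0 + l0 • (CD n S w 0 1 + CD n S w 1 0) + (l0 ^ 2) • CD n S w 1 1 -
    (τ0 ⬝ᵥ (CD n S w 1 1 *ᵥ τ0))⁻¹ •
      ((CD n S w 0 1 + l0 • CD n S w 1 1) * vecMulVec τ0 τ0 *
        (CD n S w 1 0 + l0 • CD n S w 1 1))

/-- Permutation matrix `S_σ` with `(S_σ)_{j,i} = 1` iff `i = σ j`. -/
def Smat {t : ℕ} (σ : Equiv.Perm (Fin t)) : Matrix (Fin t) (Fin t) ℝ :=
  Matrix.of fun j i => if i = σ j then 1 else 0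

/-- The relabelled sequence `σ ∘ s`. -/
def permSeq {p t : ℕ} (σ : Equiv.Perm (Fin t)) (s : TrtSeq p t) : TrtSeq p t := fun k => σ (s k)

/-- The design `σ d`, with weights `(σd)_s = p_{σ⁻¹ ∘ s}`. -/
def permDesign {p t : ℕ} (σ : Equiv.Perm (Fin t)) (w : TrtSeq p t → ℝ) : TrtSeq p t → ℝ :=
  fun s => w (permSeq σ⁻¹ s)

/-- A design is symmetric if its weights are invariant under treatment relabelling. -/
def IsSymmetricDesign {p t : ℕ} (w : TrtSeq p t → ℝ) : Prop :=
  ∀ (σ : Equiv.Perm (Fin t)) (s : TrtSeq p t), w (permSeq σ s) = w s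

/-- The symmetrized design `d*` with weights `p*_s = (1/t!) ∑_σ p_{σ⁻¹ ∘ s}`. -/
def symmetrize {p t : ℕ} (w : TrtSeq p t → ℝ) : TrtSeq p t → ℝ :=
  fun s => ((Nat.factorial t : ℝ))⁻¹ * ∑ σ : Equiv.Perm (Fin t), permDesign σ w s

/-- `q_s(x) = c_{s11} + 2 c_{s12} x + c_{s22} x²`. -/
def qSeq {p t : ℕ} (S : Matrix (Fin p) (Fin p) ℝ) (s : TrtSeq p t) (x : ℝ) : ℝ :=
  cseq S s 0 0 + 2 * cseq S s 0 1 * x + cseq S s 1 1 * x ^ 2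

/-- `q(x) = max_{s ∈ S} q_s(x)`. -/
def qMax (p t : ℕ) (S : Matrix (Fin p) (Fin p) ℝ) (x : ℝ) : ℝ :=
  sSup (Set.range fun s : TrtSeq p t => qSeq S s x)

/-- `y* = inf_x q(x)`. -/
def yStar (p t : ℕ) (S : Matrix (Fin p) (Fin p) ℝ) : ℝ := ⨅ x : ℝ, qMax p t S x

/-- `q_d(x) = ∑_s p_s q_s(x)`. -/
def qD {p t : ℕ} (S : Matrix (Fin p) (Fin p) ℝ) (w : TrtSeq p t → ℝ) (x : ℝ) : ℝ :=
  ∑ s : TrtSeq p t, w s * qSeq S s x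

/-- `x_d = -c_{d12}/c_{d22}`. -/
def xD {p t : ℕ} (n : ℕ) (S : Matrix (Fin p) (Fin p) ℝ) (w : TrtSeq p t → ℝ) : ℝ :=
  -(cD n S w 0 1) / cD n S w 1 1

/-- An exchangeable prior: a probability measure on `{τ : 1'τ = 0, τ ≠ 0}` that is
invariant under all coordinate permutations of `ℝ^t`. -/
def IsExchangeablePrior {t : ℕ} (g : Measure (Fin t → ℝ)) : Prop :=
  IsProbabilityMeasure g ∧
    g {τ : Fin t → ℝ | ¬((∑ i, τ i) = 0 ∧ τ ≠ 0)} = 0 ∧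
    ∀ σ : Equiv.Perm (Fin t), Measure.map (fun τ i => τ (σ i)) g = g

/-- `m_d(τ0) = min {ℓ' C_{d,τ0,λ0} ℓ : 1'ℓ = 0, ℓ'ℓ = 1}`. -/
def mD {p t : ℕ} (n : ℕ) (S : Matrix (Fin p) (Fin p) ℝ) (w : TrtSeq p t → ℝ) (l0 : ℝ)
    (τ0 : Fin t → ℝ) : ℝ :=
  sInf {v : ℝ | ∃ l : Fin t → ℝ, (∑ i, l i) = 0 ∧ l ⬝ᵥ l = 1 ∧
    v = l ⬝ᵥ (CInfo n S w τ0 l0 *ᵥ l)}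

/-- The E-criterion value `E_{g,λ0}(d) = ∫ m_d(τ0) g(dτ0)`. -/
def Ecrit {p t : ℕ} (n : ℕ) (S : Matrix (Fin p) (Fin p) ℝ) (g : Measure (Fin t → ℝ))
    (l0 : ℝ) (w : TrtSeq p t → ℝ) : ℝ :=
  ∫ τ0, mD n S w l0 τ0 ∂g

/-- Competing designs for E-optimality: designs with a.e. positive `τ0' C_{d22} τ0`
and `g`-integrable `m_d`. -/
def EAdmissible {p t : ℕ} (n : ℕ) (S : Matrix (Fin p) (Fin p) ℝ) (g : Measure (Fin t → ℝ))
    (l0 : ℝ) (w : TrtSeq p t → ℝ) : Prop :=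
  IsDesign w ∧ (∀ᵐ τ0 ∂g, 0 < τ0 ⬝ᵥ (CD n S w 1 1 *ᵥ τ0)) ∧
    Integrable (mD n S w l0) g

/-- `d` is `E_{g,λ0}`-optimal. -/
def EOptimal {p t : ℕ} (n : ℕ) (S : Matrix (Fin p) (Fin p) ℝ) (g : Measure (Fin t → ℝ))
    (l0 : ℝ) (w : TrtSeq p t → ℝ) : Prop :=
  ∀ w' : TrtSeq p t → ℝ, EAdmissible n S g l0 w' → Ecrit n S g l0 w' ≤ Ecrit n S g l0 w

/-- A pseudo symmetric design: treatments equireplicated in each period,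
and all `C_{dij}` completely symmetric. -/
def IsPseudoSymmetric {p t : ℕ} (n : ℕ) (S : Matrix (Fin p) (Fin p) ℝ)
    (w : TrtSeq p t → ℝ) : Prop :=
  (∀ (k : Fin p) (i : Fin t),
    (∑ s ∈ Finset.univ.filter fun s : TrtSeq p t => s k = i, w s) = 1 / (t : ℝ)) ∧
  ∀ i j : Fin 2, ∃ a b : ℝ, CD n S w i j = a • (1 : Matrix (Fin t) (Fin t) ℝ) + b • Jmat t

/-- Eigenvalues of a (Hermitian) matrix sorted increasingly with multiplicity. -/
def sortedEigs {t : ℕ} (C : Matrix (Fin t) (Fin t) ℝ) : Fin t → ℝ :=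
  if h : C.IsHermitian then (fun i => h.eigenvalues (Tuple.sort h.eigenvalues i))
  else fun _ => 0

/-- `Φ_D(C) = (∏_{i=1}^{t-1} a_i)^{1/(t-1)}` (eigenvalues sorted increasingly). -/
def PhiD {t : ℕ} (C : Matrix (Fin t) (Fin t) ℝ) : ℝ :=
  (∏ i ∈ Finset.univ.filter fun i : Fin t => (i : ℕ) ≠ 0, sortedEigs C i) ^ (((t : ℝ) - 1)⁻¹)

/-- `Φ_A(C) = (t-1)(∑_{i=1}^{t-1} a_i⁻¹)⁻¹` if `a_1 > 0`, else `0`. -/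
def PhiA {t : ℕ} (C : Matrix (Fin t) (Fin t) ℝ) : ℝ :=
  if ∀ i : Fin t, (i : ℕ) ≠ 0 → 0 < sortedEigs C i then
    ((t : ℝ) - 1) *
      (∑ i ∈ Finset.univ.filter fun i : Fin t => (i : ℕ) ≠ 0, (sortedEigs C i)⁻¹)⁻¹
  else 0

/-- `Φ_T(C) = tr(C)/(t-1)`. -/
def PhiT {t : ℕ} (C : Matrix (Fin t) (Fin t) ℝ) : ℝ := C.trace / ((t : ℝ) - 1)

/-- The criterion value `∫ Φ(C_{d,τ0,λ0}) g(dτ0)`. -/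
def PhiCrit {p t : ℕ} (n : ℕ) (S : Matrix (Fin p) (Fin p) ℝ)
    (Phi : Matrix (Fin t) (Fin t) ℝ → ℝ) (g : Measure (Fin t → ℝ)) (l0 : ℝ)
    (w : TrtSeq p t → ℝ) : ℝ :=
  ∫ τ0, Phi (CInfo n S w τ0 l0) ∂g

/-- Competing designs for a `Φ`-criterion. -/
def PhiAdmissible {p t : ℕ} (n : ℕ) (S : Matrix (Fin p) (Fin p) ℝ)
    (Phi : Matrix (Fin t) (Fin t) ℝ → ℝ) (g : Measure (Fin t → ℝ)) (l0 : ℝ)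
    (w : TrtSeq p t → ℝ) : Prop :=
  IsDesign w ∧ (∀ᵐ τ0 ∂g, 0 < τ0 ⬝ᵥ (CD n S w 1 1 *ᵥ τ0)) ∧
    Integrable (fun τ0 => Phi (CInfo n S w τ0 l0)) g

/-- `d` is `Φ_{g,λ0}`-optimal. -/
def PhiOptimal {p t : ℕ} (n : ℕ) (S : Matrix (Fin p) (Fin p) ℝ)
    (Phi : Matrix (Fin t) (Fin t) ℝ → ℝ) (g : Measure (Fin t → ℝ)) (l0 : ℝ)
    (w : TrtSeq p t → ℝ) : Prop :=
  ∀ w' : TrtSeq p t → ℝ, PhiAdmissible n S Phi g l0 w' →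
    PhiCrit n S Phi g l0 w' ≤ PhiCrit n S Phi g l0 w

/-- `H_1(s) = F_s`, `H_2(s) = T_s + λ0 F_s` (for estimating `λ`). -/
def Hmat {p t : ℕ} (l0 : ℝ) (i : Fin 2) (s : TrtSeq p t) : Matrix (Fin p) (Fin t) ℝ :=
  if i = 0 then Fmat s else Tmat s + l0 • Fmat s

/-- `Â_{sij} = B_t H_i(s)' B̃ H_j(s) B_t`. -/
def Ahat {p t : ℕ} (S : Matrix (Fin p) (Fin p) ℝ) (l0 : ℝ) (s : TrtSeq p t) (i j : Fin 2) :
    Matrix (Fin t) (Fin t) ℝ :=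
  Bmat t * (Hmat l0 i s)ᵀ * Btil S * Hmat l0 j s * Bmat t

/-- `h_{sij} = tr Â_{sij}`. -/
def hseq {p t : ℕ} (S : Matrix (Fin p) (Fin p) ℝ) (l0 : ℝ) (s : TrtSeq p t) (i j : Fin 2) : ℝ :=
  (Ahat S l0 s i j).trace

/-- `Â_{dij} = n ∑_s p_s Â_{sij}`. -/
def AhatD {p t : ℕ} (n : ℕ) (S : Matrix (Fin p) (Fin p) ℝ) (l0 : ℝ) (w : TrtSeq p t → ℝ)
    (i j : Fin 2) : Matrix (Fin t) (Fin t) ℝ :=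
  (n : ℝ) • ∑ s : TrtSeq p t, w s • Ahat S l0 s i j

/-- `A_{dij} = Â_{dij} - n (∑_s p_s H_i(s) B_t)' B̃ (∑_s p_s H_j(s) B_t)`. -/
def AD {p t : ℕ} (n : ℕ) (S : Matrix (Fin p) (Fin p) ℝ) (l0 : ℝ) (w : TrtSeq p t → ℝ)
    (i j : Fin 2) : Matrix (Fin t) (Fin t) ℝ :=
  AhatD n S l0 w i j -
    (n : ℝ) • ((∑ s : TrtSeq p t, w s • (Hmat l0 i s * Bmat t))ᵀ * Btil S *
      (∑ s : TrtSeq p t, w s • (Hmat l0 j s * Bmat t)))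

/-- `G` is a generalized inverse of `A`. -/
def IsGInv {t : ℕ} (A G : Matrix (Fin t) (Fin t) ℝ) : Prop := A * G * A = A

/-- `A_d(G) = A_{d11} - A_{d12} G A_{d21}` with `A_{d21} = A_{d12}'`. -/
def ADfun {p t : ℕ} (n : ℕ) (S : Matrix (Fin p) (Fin p) ℝ) (l0 : ℝ) (w : TrtSeq p t → ℝ)
    (G : Matrix (Fin t) (Fin t) ℝ) : Matrix (Fin t) (Fin t) ℝ :=
  AD n S l0 w 0 0 - AD n S l0 w 0 1 * G * (AD n S l0 w 0 1)ᵀ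

/-- `r_s(x) = h_{s11} + 2 h_{s12} x + h_{s22} x²`. -/
def rSeq {p t : ℕ} (S : Matrix (Fin p) (Fin p) ℝ) (l0 : ℝ) (s : TrtSeq p t) (x : ℝ) : ℝ :=
  hseq S l0 s 0 0 + 2 * hseq S l0 s 0 1 * x + hseq S l0 s 1 1 * x ^ 2

/-- `r(x) = max_s r_s(x)`. -/
def rMax (p t : ℕ) (S : Matrix (Fin p) (Fin p) ℝ) (l0 : ℝ) (x : ℝ) : ℝ :=
  sSup (Set.range fun s : TrtSeq p t => rSeq S l0 s x)

/-- `y_0 = inf_x r(x)`. -/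
def yZero (p t : ℕ) (S : Matrix (Fin p) (Fin p) ℝ) (l0 : ℝ) : ℝ := ⨅ x : ℝ, rMax p t S l0 x

/-
With `τ` fixed, `CInfo` is the Schur complement, for the nuisance direction `(0, τ)`, of the joint
information of direct and carryover effects, and the joint information is dominated by the joint
moment matrix. Hence the trace of `CInfo` and its Rayleigh quotient at `τ` are bounded by those of
moment matrices, which are linear in the design. The eigenvalue of `CInfo` along `τ` is
`qD(x_d) / qD(l0)` times the others for a pseudo symmetric design, so the arithmetic-geometric mean
inequality is applied after rescaling that direction. Integrated over an exchangeable prior, a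
Rayleigh quotient becomes `trace / (t - 1)`, and the result is that no design exceeds the criterion
at `w` by a factor larger than its mean sensitivity. This is sufficiency.

For necessity, mix `w` with the uniform distribution on the relabellings of a sequence `s`. The
mixture is pseudo symmetric, so its criterion is explicit, and the first-order condition at `w` says
that the sensitivity at `s` is at most `1`. Since `w` has mean sensitivity `1`, the maximum of the
sensitivity is then `1` and is attained on the support of `w`.
-/

section CompletelySymmetricMatrices

variable {m R : Type*} [Fintype m] [CommRing R] {t : ℕ}

lemma det_one_add_smul_vecMulVec [DecidableEq m] (c : R) (u v : m → R) :
    (1 + c • vecMulVec u v).det = 1 + c * (v ⬝ᵥ u) := by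
  rw [← smul_vecMulVec, vecMulVec_eq Unit, det_one_add_replicateCol_mul_replicateRow,
    dotProduct_smul, smul_eq_mul]

lemma trace_mul_vecMulVec (A : Matrix m m R) (u v : m → R) :
    (A * vecMulVec u v).trace = v ⬝ᵥ (A *ᵥ u) := by
  rw [mul_vecMulVec, trace_vecMulVec, dotProduct_comm]

lemma Jmat_eq_vecMulVec (t : ℕ) : Jmat t = vecMulVec 1 1 := by
  ext; simp [Jmat, vecMulVec_apply]

lemma transpose_Jmat (t : ℕ) : (Jmat t)ᵀ = Jmat t := rfl

lemma transpose_Bmat (t : ℕ) : (Bmat t)ᵀ = Bmat t := by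
  rw [Bmat, transpose_sub, transpose_one, transpose_smul, transpose_Jmat]

lemma mul_Jmat_eq_zero {A : Matrix (Fin t) (Fin t) ℝ} (hA : A *ᵥ 1 = 0) : A * Jmat t = 0 := by
  rw [Jmat_eq_vecMulVec, mul_vecMulVec, hA, zero_vecMulVec]

lemma Bmat_mulVec_of_sum_eq_zero {v : Fin t → ℝ} (hv : ∑ i, v i = 0) : Bmat t *ᵥ v = v := by
  rw [Bmat, sub_mulVec, one_mulVec, smul_mulVec, Jmat_eq_vecMulVec, vecMulVec_mulVec,
    one_dotProduct, hv]
  simp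

lemma Bmat_mulVec_one (t : ℕ) : Bmat t *ᵥ 1 = 0 := by
  ext i
  have : NeZero t := ⟨i.pos.ne'⟩
  rw [Bmat, sub_mulVec, one_mulVec, smul_mulVec, Jmat_eq_vecMulVec, vecMulVec_mulVec]
  simp

lemma natCast_sub_one_pos (ht : 2 ≤ t) : (0 : ℝ) < t - 1 := by
  have : (2 : ℝ) ≤ t := mod_cast ht
  linarith

/- Transitivity on points makes the diagonal constant, transitivity on pairs of distinct points
makes the off-diagonal part constant, and the row sums tie the two constants together. -/
lemma eq_smul_Bmat (ht : 2 ≤ t) {A : Matrix (Fin t) (Fin t) ℝ}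
    (hA : ∀ σ : Equiv.Perm (Fin t), A.submatrix σ σ = A) (hA1 : A *ᵥ 1 = 0) :
    A = (A.trace / (t - 1)) • Bmat t := by
  have ht0 : (t : ℝ) ≠ 0 := by positivity
  have ht1 := (natCast_sub_one_pos ht).ne'
  have hswap (i j k l) : A (Equiv.swap i j k) (Equiv.swap i j l) = A k l :=
    congrFun (congrFun (hA (Equiv.swap i j)) k) l
  have hdiag (i j) : A i i = A j j := by simpa using hswap i j j j
  have hoff (i j) (hij : i ≠ j) : (t - 1) * A i j = -A i i := by
    have hrow : ∀ k ∈ Finset.univ.erase i, A i k = A i j := fun k hk => by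
      simpa [Equiv.swap_apply_of_ne_of_ne hij (Finset.ne_of_mem_erase hk).symm]
        using hswap j k i j
    have hsum : ∑ k, A i k = 0 := by simpa [mulVec, dotProduct] using congrFun hA1 i
    rw [← Finset.add_sum_erase _ _ (Finset.mem_univ i), Finset.sum_congr rfl hrow,
      Finset.sum_const, Finset.card_erase_of_mem (Finset.mem_univ _), nsmul_eq_mul,
      Finset.card_univ, Fintype.card_fin, Nat.cast_sub (by omega), Nat.cast_one] at hsum
    linarith
  have htrace (i) : A.trace = t * A i i := by
    simp only [trace, diag_apply, hdiag _ i, Finset.sum_const, Finset.card_univ, Fintype.card_fin,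
      nsmul_eq_mul]
  ext i j
  rw [htrace i]
  by_cases hij : i = j
  · subst hij
    simp only [Bmat, Jmat, smul_of, Matrix.sub_apply, one_apply_eq, of_apply, Pi.smul_apply,
      Matrix.smul_apply, smul_eq_mul, mul_one]
    field_simp
  · have := hoff i j hij
    simp only [Bmat, Jmat, smul_of, Matrix.smul_apply, Matrix.sub_apply, one_apply_ne hij,
      of_apply, Pi.smul_apply, smul_eq_mul, mul_one, zero_sub, mul_neg]
    field_simp
    linarith

end CompletelySymmetricMatrices

section DCriterion

variable {m : Type*} [Fintype m] [DecidableEq m] {t : ℕ} {C : Matrix (Fin t) (Fin t) ℝ}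

lemma det_add_smul_one {A : Matrix m m ℝ} (hA : A.IsHermitian) (x : ℝ) :
    (A + x • (1 : Matrix m m ℝ)).det = ∏ i, (hA.eigenvalues i + x) := by
  have hchar := congrArg (Polynomial.eval (-x)) hA.charpoly_eq
  simp only [eval_charpoly, Polynomial.eval_prod, Polynomial.eval_sub, Polynomial.eval_X,
    Polynomial.eval_C] at hchar
  have hneg : A + x • (1 : Matrix m m ℝ) = -(scalar m (-x) - A) := by
    rw [scalar_apply, ← smul_one_eq_diagonal, neg_smul]
    abel
  have hfactor (i) : hA.eigenvalues i + x = -(-x - hA.eigenvalues i) := by ring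
  rw [hneg, det_neg, hchar, Finset.prod_congr rfl fun i _ => hfactor i, Finset.prod_neg]
  rfl

lemma sortedEigs_eq (hC : C.IsHermitian) :
    sortedEigs C = hC.eigenvalues ∘ Tuple.sort hC.eigenvalues :=
  dif_pos hC

lemma sortedEigs_nonneg (hC : C.PosSemidef) (i : Fin t) : 0 ≤ sortedEigs C i := by
  rw [sortedEigs_eq hC.isHermitian]
  exact hC.eigenvalues_nonneg _

lemma monotone_sortedEigs (hC : C.IsHermitian) : Monotone (sortedEigs C) := by
  rw [sortedEigs_eq hC]
  exact Tuple.monotone_sort hC.eigenvalues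

lemma sum_sortedEigs (hC : C.IsHermitian) : ∑ i, sortedEigs C i = C.trace := by
  rw [sortedEigs_eq hC, hC.trace_eq_sum_eigenvalues]
  exact Equiv.sum_comp _ hC.eigenvalues

lemma prod_sortedEigs_add (hC : C.IsHermitian) (x : ℝ) :
    ∏ i, (sortedEigs C i + x) = (C + x • (1 : Matrix (Fin t) (Fin t) ℝ)).det := by
  rw [det_add_smul_one hC, sortedEigs_eq hC]
  exact Equiv.prod_comp (Tuple.sort hC.eigenvalues) fun i => hC.eigenvalues i + x

lemma filter_val_ne_zero [NeZero t] :
    Finset.univ.filter (fun i : Fin t => (i : ℕ) ≠ 0) = Finset.univ.erase 0 := by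
  ext; simp

lemma sortedEigs_zero [NeZero t] (hC : C.PosSemidef) (hC1 : C *ᵥ 1 = 0) :
    sortedEigs C 0 = 0 := by
  have hdet : C.det = 0 := exists_mulVec_eq_zero_iff.1 ⟨1, one_ne_zero, hC1⟩
  have hprod : ∏ i, sortedEigs C i = 0 := by
    simpa [hdet] using prod_sortedEigs_add hC.isHermitian 0
  obtain ⟨i, -, hi⟩ := Finset.prod_eq_zero_iff.1 hprod
  exact le_antisymm (hi ▸ monotone_sortedEigs hC.isHermitian (Fin.zero_le i))
    (sortedEigs_nonneg hC 0)

lemma sum_sortedEigs_ne_zero [NeZero t] (hC : C.PosSemidef) (hC1 : C *ᵥ 1 = 0) :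
    ∑ i ∈ Finset.univ.filter fun i : Fin t => (i : ℕ) ≠ 0, sortedEigs C i = C.trace := by
  rw [filter_val_ne_zero, ← sum_sortedEigs hC.isHermitian,
    ← Finset.add_sum_erase _ _ (Finset.mem_univ (0 : Fin t)), sortedEigs_zero hC hC1, zero_add]

lemma mul_det_add_smul_one_add_Jmat [NeZero t] (hC1 : C *ᵥ 1 = 0) {x : ℝ} (hx : x ≠ 0) :
    x * (C + x • (1 : Matrix (Fin t) (Fin t) ℝ) + (t : ℝ)⁻¹ • Jmat t).det =
      (x + 1) * (C + x • (1 : Matrix (Fin t) (Fin t) ℝ)).det := by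
  have hfactor : C + x • (1 : Matrix (Fin t) (Fin t) ℝ) + (t : ℝ)⁻¹ • Jmat t =
      (C + x • (1 : Matrix (Fin t) (Fin t) ℝ)) * (1 + (x⁻¹ * (t : ℝ)⁻¹) • Jmat t) := by
    rw [mul_add, mul_one, add_mul, mul_smul_comm, mul_Jmat_eq_zero hC1, smul_zero, zero_add,
      smul_mul_assoc, one_mul, smul_smul, mul_inv_cancel_left₀ hx]
  rw [hfactor, det_mul, Jmat_eq_vecMulVec, det_one_add_smul_vecMulVec, one_dotProduct_one,
    Fintype.card_fin]
  have ht : (t : ℝ) ≠ 0 := NeZero.ne _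
  field_simp

/- `1` is the eigenvector of the smallest eigenvalue `0`; adding `t⁻¹ • J` moves that eigenvalue
to `1` and leaves the others alone. -/
lemma prod_sortedEigs_ne_zero [NeZero t] (hC : C.PosSemidef) (hC1 : C *ᵥ 1 = 0) :
    ∏ i ∈ Finset.univ.filter fun i : Fin t => (i : ℕ) ≠ 0, sortedEigs C i =
      (C + (t : ℝ)⁻¹ • Jmat t).det := by
  rw [filter_val_ne_zero]
  have hprod (x : ℝ) (hx : x ≠ 0) :
      (x + 1) * ∏ i ∈ Finset.univ.erase 0, (sortedEigs C i + x) =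
        (C + x • (1 : Matrix (Fin t) (Fin t) ℝ) + (t : ℝ)⁻¹ • Jmat t).det := by
    refine mul_left_cancel₀ hx ?_
    rw [mul_det_add_smul_one_add_Jmat hC1 hx, ← prod_sortedEigs_add hC.isHermitian,
      ← Finset.mul_prod_erase _ _ (Finset.mem_univ (0 : Fin t)), sortedEigs_zero hC hC1]
    ring
  have hcont := Continuous.ext_on (dense_compl_singleton (0 : ℝ)) (by fun_prop) (by fun_prop) hprod
  simpa using congrFun hcont 0

lemma PhiD_eq_det_rpow [NeZero t] (hC : C.PosSemidef) (hC1 : C *ᵥ 1 = 0) :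
    PhiD C = (C + (t : ℝ)⁻¹ • Jmat t).det ^ ((t : ℝ) - 1)⁻¹ := by
  rw [PhiD, prod_sortedEigs_ne_zero hC hC1]

lemma det_add_Jmat_nonneg [NeZero t] (hC : C.PosSemidef) (hC1 : C *ᵥ 1 = 0) :
    0 ≤ (C + (t : ℝ)⁻¹ • Jmat t).det := by
  rw [← prod_sortedEigs_ne_zero hC hC1]
  exact Finset.prod_nonneg fun i _ => sortedEigs_nonneg hC i

lemma PhiD_le_trace_div (ht : 2 ≤ t) (hC : C.PosSemidef) (hC1 : C *ᵥ 1 = 0) :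
    PhiD C ≤ C.trace / (t - 1) := by
  have : NeZero t := ⟨by omega⟩
  have ht1 := natCast_sub_one_pos ht
  have hcard : ((Finset.univ.filter fun i : Fin t => (i : ℕ) ≠ 0).card : ℝ) = t - 1 := by
    rw [filter_val_ne_zero, Finset.card_erase_of_mem (Finset.mem_univ _), Finset.card_univ,
      Fintype.card_fin, Nat.cast_sub (by omega), Nat.cast_one]
  have hamgm := Real.geom_mean_le_arith_mean_weighted
    (Finset.univ.filter fun i : Fin t => (i : ℕ) ≠ 0) (fun _ => ((t : ℝ) - 1)⁻¹) (sortedEigs C)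
    (fun _ _ => by positivity)
    (by rw [Finset.sum_const, nsmul_eq_mul, hcard, mul_inv_cancel₀ ht1.ne'])
    (fun i _ => sortedEigs_nonneg hC i)
  rwa [← Finset.mul_sum, sum_sortedEigs_ne_zero hC hC1,
    Real.finsetProd_rpow _ _ (fun i _ => sortedEigs_nonneg hC i), ← div_eq_inv_mul] at hamgm

end DCriterion

section ResidualForm

variable {m : Type*} [Fintype m] {M : Matrix m m ℝ}

/-- Residual quadratic form: the minimum over `c` of the quadratic form of `M` at `z + c • u`. When
`u ⬝ᵥ (M *ᵥ u) = 0` the inverse is `0` and the value is the form at `z` itself. -/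
def residualForm (M : Matrix m m ℝ) (u z : m → ℝ) : ℝ :=
  z ⬝ᵥ (M *ᵥ z) - (u ⬝ᵥ (M *ᵥ u))⁻¹ * (z ⬝ᵥ (M *ᵥ u)) ^ 2

lemma dotProduct_mulVec_comm_of_isSymm (hM : M.IsSymm) (u v : m → ℝ) :
    u ⬝ᵥ (M *ᵥ v) = v ⬝ᵥ (M *ᵥ u) := by
  rw [dotProduct_mulVec, dotProduct_comm, ← mulVec_transpose, hM.eq]

lemma dotProduct_mulVec_add_smul (hM : M.IsSymm) (u z : m → ℝ) (c : ℝ) :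
    (z + c • u) ⬝ᵥ (M *ᵥ (z + c • u)) =
      z ⬝ᵥ (M *ᵥ z) + 2 * c * (z ⬝ᵥ (M *ᵥ u)) + c ^ 2 * (u ⬝ᵥ (M *ᵥ u)) := by
  simp only [mulVec_add, mulVec_smul, add_dotProduct, dotProduct_add, smul_dotProduct,
    dotProduct_smul, smul_eq_mul, dotProduct_mulVec_comm_of_isSymm hM u z]
  ring

lemma residualForm_le (hM : M.IsSymm) {u : m → ℝ} (hu : 0 < u ⬝ᵥ (M *ᵥ u)) (z : m → ℝ) (c : ℝ) :
    residualForm M u z ≤ (z + c • u) ⬝ᵥ (M *ᵥ (z + c • u)) := by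
  have hsq : (z + c • u) ⬝ᵥ (M *ᵥ (z + c • u)) - residualForm M u z =
      (u ⬝ᵥ (M *ᵥ u))⁻¹ * (z ⬝ᵥ (M *ᵥ u) + c * (u ⬝ᵥ (M *ᵥ u))) ^ 2 := by
    rw [dotProduct_mulVec_add_smul hM, residualForm]
    field_simp
    ring
  have : 0 ≤ (u ⬝ᵥ (M *ᵥ u))⁻¹ * (z ⬝ᵥ (M *ᵥ u) + c * (u ⬝ᵥ (M *ᵥ u))) ^ 2 := by positivity
  linarith

lemma residualForm_nonneg (hM : M.PosSemidef) (u z : m → ℝ) : 0 ≤ residualForm M u z := by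
  have hnonneg (v : m → ℝ) : 0 ≤ v ⬝ᵥ (M *ᵥ v) := hM.dotProduct_mulVec_nonneg v
  rcases (hnonneg u).eq_or_lt with hu | hu
  · simpa [residualForm, ← hu] using hnonneg z
  · have hmin := hnonneg (z + (-(z ⬝ᵥ (M *ᵥ u)) / (u ⬝ᵥ (M *ᵥ u))) • u)
    rw [dotProduct_mulVec_add_smul (isHermitian_iff_isSymm.1 hM.isHermitian)] at hmin
    convert hmin using 1
    rw [residualForm]
    field_simp
    ring

end ResidualForm

section Rayleigh

variable {m : Type*} [Fintype m] {τ : m → ℝ}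

/-- The Rayleigh quotient of `A` at `τ`, with value `0` at `τ = 0`. -/
def rayleigh (A : Matrix m m ℝ) (τ : m → ℝ) : ℝ := τ ⬝ᵥ (A *ᵥ τ) / (τ ⬝ᵥ τ)

/-- The symmetric matrix scaling the direction of `τ` by `b` and fixing the vectors
orthogonal to `τ`. -/
def dilation [DecidableEq m] (τ : m → ℝ) (b : ℝ) : Matrix m m ℝ :=
  1 + ((b - 1) * (τ ⬝ᵥ τ)⁻¹) • vecMulVec τ τ

lemma dotProduct_self_pos (hτ : τ ≠ 0) : 0 < τ ⬝ᵥ τ := by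
  simpa using dotProduct_star_self_pos_iff.2 hτ

lemma rayleigh_sub (A B : Matrix m m ℝ) (τ : m → ℝ) :
    rayleigh (A - B) τ = rayleigh A τ - rayleigh B τ := by
  rw [rayleigh, sub_mulVec, dotProduct_sub, sub_div, rayleigh, rayleigh]

variable [DecidableEq m]

lemma transpose_dilation (τ : m → ℝ) (b : ℝ) : (dilation τ b)ᵀ = dilation τ b := by
  simp [dilation, transpose_vecMulVec]

lemma dilation_mulVec_of_dotProduct_eq_zero {v : m → ℝ} (hv : τ ⬝ᵥ v = 0) (b : ℝ) :
    dilation τ b *ᵥ v = v := by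
  simp [dilation, add_mulVec, smul_mulVec, vecMulVec_mulVec, hv]

lemma det_dilation (hτ : τ ≠ 0) (b : ℝ) : (dilation τ b).det = b := by
  rw [dilation, det_one_add_smul_vecMulVec, mul_assoc,
    inv_mul_cancel₀ (dotProduct_self_pos hτ).ne']
  ring

lemma dilation_mul_dilation (hτ : τ ≠ 0) (b c : ℝ) :
    dilation τ b * dilation τ c = dilation τ (b * c) := by
  have hττ := (dotProduct_self_pos hτ).ne'
  have hsq : vecMulVec τ τ * vecMulVec τ τ = (τ ⬝ᵥ τ) • vecMulVec τ τ := by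
    rw [vecMulVec_mul_vecMulVec, vecMulVec_smul]
  simp only [dilation, mul_add, add_mul, mul_one, one_mul, smul_mul_assoc, mul_smul_comm, hsq,
    smul_smul]
  match_scalars
  · rfl
  · field_simp
    ring

lemma trace_mul_dilation (A : Matrix m m ℝ) (τ : m → ℝ) (b : ℝ) :
    (A * dilation τ b).trace = A.trace + (b - 1) * rayleigh A τ := by
  rw [dilation, mul_add, mul_one, mul_smul_comm, trace_add, trace_smul, trace_mul_vecMulVec,
    rayleigh, smul_eq_mul]
  ring

lemma trace_dilation_conj (hτ : τ ≠ 0) (A : Matrix m m ℝ) (b : ℝ) :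
    (dilation τ b * A * dilation τ b).trace = A.trace + (b ^ 2 - 1) * rayleigh A τ := by
  rw [trace_mul_cycle, dilation_mul_dilation hτ, trace_mul_comm, trace_mul_dilation, sq]

lemma posSemidef_dilation_conj {A : Matrix m m ℝ} (hA : A.PosSemidef) (τ : m → ℝ) (b : ℝ) :
    (dilation τ b * A * dilation τ b).PosSemidef := by
  simpa [conjTranspose_eq_transpose_of_trivial, transpose_dilation]
    using hA.conjTranspose_mul_mul_same (dilation τ b)

end Rayleigh

lemma rayleigh_le_trace {m : Type*} [Fintype m] {τ : m → ℝ} (hτ : τ ≠ 0) {A : Matrix m m ℝ}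
    (hA : A.PosSemidef) : rayleigh A τ ≤ A.trace := by
  have hnonneg := (posSemidef_dilation_conj hA τ 0).trace_nonneg
  rw [trace_dilation_conj hτ] at hnonneg
  linarith

section DilatedDCriterion

variable {t : ℕ} {τ : Fin t → ℝ} {C : Matrix (Fin t) (Fin t) ℝ}

lemma dilation_mulVec_one (hτ0 : ∑ i, τ i = 0) (b : ℝ) : dilation τ b *ᵥ 1 = 1 :=
  dilation_mulVec_of_dotProduct_eq_zero (by rw [dotProduct_one, hτ0]) b

lemma dilation_conj_add_Jmat (hτ0 : ∑ i, τ i = 0) (b x : ℝ) :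
    dilation τ b * (C + x • Jmat t) * dilation τ b =
      dilation τ b * C * dilation τ b + x • Jmat t := by
  have hJ : dilation τ b * Jmat t * dilation τ b = Jmat t := by
    rw [Jmat_eq_vecMulVec, mul_vecMulVec, dilation_mulVec_one hτ0, vecMulVec_mul,
      ← mulVec_transpose, transpose_dilation, dilation_mulVec_one hτ0]
  rw [mul_add, add_mul, mul_smul_comm, smul_mul_assoc, hJ]

/- Apply the arithmetic-geometric mean inequality to `C` dilated by `√r` along `τ`, so that equality
can hold for a `C` whose eigenvalue along `τ` differs from the others. -/
lemma rpow_mul_PhiD_le (ht : 2 ≤ t) (hτ0 : ∑ i, τ i = 0) (hτ : τ ≠ 0) (hC : C.PosSemidef)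
    (hC1 : C *ᵥ 1 = 0) {r : ℝ} (hr : 0 ≤ r) :
    r ^ ((t : ℝ) - 1)⁻¹ * PhiD C ≤ (C.trace + (r - 1) * rayleigh C τ) / (t - 1) := by
  have : NeZero t := ⟨by omega⟩
  set D := dilation τ √r with hD
  have hP : (D * C * D).PosSemidef := posSemidef_dilation_conj hC τ _
  have hP1 : (D * C * D) *ᵥ 1 = 0 := by
    rw [← mulVec_mulVec, hD, dilation_mulVec_one hτ0, ← mulVec_mulVec, hC1, mulVec_zero]
  have hdet : (D * C * D + (t : ℝ)⁻¹ • Jmat t).det = r * (C + (t : ℝ)⁻¹ • Jmat t).det := by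
    rw [hD, ← dilation_conj_add_Jmat hτ0, det_mul, det_mul, det_dilation hτ, mul_right_comm,
      Real.mul_self_sqrt hr]
  have hPhi : PhiD (D * C * D) = r ^ ((t : ℝ) - 1)⁻¹ * PhiD C := by
    rw [PhiD_eq_det_rpow hP hP1, hdet, Real.mul_rpow hr (det_add_Jmat_nonneg hC hC1),
      ← PhiD_eq_det_rpow hC hC1]
  rw [← hPhi, ← Real.sq_sqrt hr, ← trace_dilation_conj hτ]
  exact PhiD_le_trace_div ht hP hP1

end DilatedDCriterion

section ExchangeablePrior

variable {t : ℕ} {g : Measure (Fin t → ℝ)}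

/-- The second-moment matrix of the direction `τ / ‖τ‖`. -/
def directionMoment (g : Measure (Fin t → ℝ)) : Matrix (Fin t) (Fin t) ℝ :=
  Matrix.of fun i j => ∫ τ, τ i * τ j / (τ ⬝ᵥ τ) ∂g

lemma measurable_mul_div_dotProduct (i j : Fin t) :
    Measurable fun τ : Fin t → ℝ => τ i * τ j / (τ ⬝ᵥ τ) := by
  simp only [dotProduct]
  fun_prop

lemma abs_mul_div_dotProduct_le_one (τ : Fin t → ℝ) (i j : Fin t) :
    |τ i * τ j / (τ ⬝ᵥ τ)| ≤ 1 := by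
  have hsq (k) : τ k * τ k ≤ τ ⬝ᵥ τ :=
    Finset.single_le_sum (f := fun k => τ k * τ k) (fun k _ => mul_self_nonneg (τ k))
      (Finset.mem_univ k)
  have hττ : 0 ≤ τ ⬝ᵥ τ := (mul_self_nonneg _).trans (hsq i)
  rw [abs_div, abs_of_nonneg hττ]
  refine div_le_one_of_le₀ (abs_le.2 ⟨?_, ?_⟩) hττ <;>
    nlinarith [hsq i, hsq j, sq_nonneg (τ i + τ j), sq_nonneg (τ i - τ j)]

lemma integrable_mul_div_dotProduct [IsFiniteMeasure g] (i j : Fin t) :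
    Integrable (fun τ : Fin t → ℝ => τ i * τ j / (τ ⬝ᵥ τ)) g :=
  .of_bound (measurable_mul_div_dotProduct i j).aestronglyMeasurable 1
    (.of_forall fun τ => abs_mul_div_dotProduct_le_one τ i j)

lemma rayleigh_eq_sum (A : Matrix (Fin t) (Fin t) ℝ) (τ : Fin t → ℝ) :
    rayleigh A τ = ∑ i, ∑ j, A i j * (τ j * τ i / (τ ⬝ᵥ τ)) := by
  simp only [rayleigh, mulVec, dotProduct, Finset.mul_sum, Finset.sum_div]
  refine Finset.sum_congr rfl fun i _ => Finset.sum_congr rfl fun j _ => ?_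
  ring

lemma integrable_rayleigh [IsFiniteMeasure g] (A : Matrix (Fin t) (Fin t) ℝ) :
    Integrable (rayleigh A) g := by
  rw [funext (rayleigh_eq_sum A)]
  exact integrable_finsetSum _ fun i _ => integrable_finsetSum _ fun j _ =>
    (integrable_mul_div_dotProduct j i).const_mul _

lemma integral_rayleigh_eq_trace [IsFiniteMeasure g] (A : Matrix (Fin t) (Fin t) ℝ) :
    ∫ τ, rayleigh A τ ∂g = (A * directionMoment g).trace := by
  have hint (i j) : Integrable (fun τ : Fin t → ℝ => A i j * (τ j * τ i / (τ ⬝ᵥ τ))) g :=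
    (integrable_mul_div_dotProduct j i).const_mul _
  simp only [rayleigh_eq_sum, trace, diag_apply, mul_apply, directionMoment, of_apply]
  rw [integral_finsetSum _ fun i _ => integrable_finsetSum _ fun j _ => hint i j]
  refine Finset.sum_congr rfl fun i _ => ?_
  rw [integral_finsetSum _ fun j _ => hint i j]
  exact Finset.sum_congr rfl fun j _ => integral_const_mul _ _

namespace IsExchangeablePrior

lemma ae_sum_eq_zero_and_ne_zero (hg : IsExchangeablePrior g) :
    ∀ᵐ τ ∂g, ∑ i, τ i = 0 ∧ τ ≠ 0 :=
  ae_iff.2 hg.2.1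

lemma submatrix_directionMoment (hg : IsExchangeablePrior g) (σ : Equiv.Perm (Fin t)) :
    (directionMoment g).submatrix σ σ = directionMoment g := by
  ext i j
  have hσ : Measurable fun (τ : Fin t → ℝ) k => τ (σ k) := by fun_prop
  have hnorm (τ : Fin t → ℝ) : (fun k => τ (σ k)) ⬝ᵥ (fun k => τ (σ k)) = τ ⬝ᵥ τ :=
    Equiv.sum_comp σ fun k => τ k * τ k
  simp only [directionMoment, submatrix_apply, of_apply]
  conv_rhs => rw [← hg.2.2 σ]
  rw [integral_map hσ.aemeasurable (measurable_mul_div_dotProduct i j).aestronglyMeasurable]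
  simp only [hnorm]

lemma directionMoment_mulVec_one (hg : IsExchangeablePrior g) :
    directionMoment g *ᵥ 1 = 0 := by
  have := hg.1
  ext i
  simp only [mulVec, dotProduct_one, directionMoment, of_apply, Pi.zero_apply]
  rw [← integral_finsetSum _ fun j _ => integrable_mul_div_dotProduct i j]
  refine integral_eq_zero_of_ae ?_
  filter_upwards [hg.ae_sum_eq_zero_and_ne_zero] with τ hτ
  rw [← Finset.sum_div, ← Finset.mul_sum, hτ.1, mul_zero, zero_div, Pi.zero_apply]

lemma trace_directionMoment (hg : IsExchangeablePrior g) : (directionMoment g).trace = 1 := by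
  have := hg.1
  simp only [trace, diag_apply, directionMoment, of_apply]
  rw [← integral_finsetSum _ fun i _ => integrable_mul_div_dotProduct i i]
  have hone : ∀ᵐ τ ∂g, ∑ i, τ i * τ i / (τ ⬝ᵥ τ) = 1 := by
    filter_upwards [hg.ae_sum_eq_zero_and_ne_zero] with τ hτ
    rw [← Finset.sum_div]
    exact div_self (dotProduct_self_pos hτ.2).ne'
  rw [integral_congr_ae hone]
  simp

lemma directionMoment_eq (hg : IsExchangeablePrior g) (ht : 2 ≤ t) :
    directionMoment g = (1 / ((t : ℝ) - 1)) • Bmat t := by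
  rw [eq_smul_Bmat ht hg.submatrix_directionMoment hg.directionMoment_mulVec_one,
    hg.trace_directionMoment]

lemma integral_rayleigh (hg : IsExchangeablePrior g) (ht : 2 ≤ t)
    {A : Matrix (Fin t) (Fin t) ℝ} (hA1 : A *ᵥ 1 = 0) :
    ∫ τ, rayleigh A τ ∂g = A.trace / (t - 1) := by
  have := hg.1
  rw [integral_rayleigh_eq_trace, hg.directionMoment_eq ht, mul_smul_comm, trace_smul, Bmat,
    mul_sub, mul_one, mul_smul_comm, mul_Jmat_eq_zero hA1, smul_zero, sub_zero, smul_eq_mul,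
    one_div_mul_eq_div]

end IsExchangeablePrior

end ExchangeablePrior

section BlockMatrices

variable {ι m R : Type*} [CommRing R]

/-- The square block matrix on `ι × m` with blocks `C i j`. -/
def blockMatrix (C : ι → ι → Matrix m m R) : Matrix (ι × m) (ι × m) R :=
  of fun a b => C a.1 b.1 a.2 b.2

/-- The vector on `ι × m` whose `i`-th block is `c i • v`. -/
def tensorVec (c : ι → R) (v : m → R) : ι × m → R := fun a => c a.1 * v a.2

lemma tensorVec_dotProduct_blockMatrix_mulVec [Fintype ι] [Fintype m]
    (C : ι → ι → Matrix m m R) (c d : ι → R) (u v : m → R) :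
    tensorVec c u ⬝ᵥ (blockMatrix C *ᵥ tensorVec d v) =
      ∑ i, ∑ j, c i * d j * (u ⬝ᵥ (C i j *ᵥ v)) := by
  simp only [tensorVec, blockMatrix, dotProduct, mulVec, of_apply, Fintype.sum_prod_type,
    Finset.mul_sum]
  refine Finset.sum_congr rfl fun i _ => ?_
  rw [Finset.sum_comm]
  refine Finset.sum_congr rfl fun j _ => Finset.sum_congr rfl fun k _ =>
    Finset.sum_congr rfl fun l _ => ?_
  ring

end BlockMatrices

section WeightedCovariance

variable {ι k m : Type*} [Fintype ι] [Fintype k] {B : Matrix k k ℝ} {w : ι → ℝ}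

/-- The `w`-weighted covariance of the matrices `X i` with respect to the form `B`. -/
def weightedCov (B : Matrix k k ℝ) (w : ι → ℝ) (X : ι → Matrix k m ℝ) : Matrix m m ℝ :=
  ∑ i, w i • ((X i)ᵀ * B * X i) - (∑ i, w i • X i)ᵀ * B * ∑ i, w i • X i

lemma weightedCov_eq_sum (hw1 : ∑ i, w i = 1) (X : ι → Matrix k m ℝ) :
    weightedCov B w X =
      ∑ i, w i • ((X i - ∑ j, w j • X j)ᵀ * B * (X i - ∑ j, w j • X j)) := by
  rw [weightedCov]
  set M := ∑ i, w i • X i with hM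
  have hexpand (i) : w i • ((X i - M)ᵀ * B * (X i - M)) = w i • ((X i)ᵀ * B * X i) -
      (w i • X i)ᵀ * B * M - Mᵀ * B * (w i • X i) + w i • (Mᵀ * B * M) := by
    simp only [transpose_sub, Matrix.sub_mul, Matrix.mul_sub, smul_sub, transpose_smul,
      Matrix.smul_mul, Matrix.mul_smul]
    abel
  simp only [hexpand, Finset.sum_add_distrib, Finset.sum_sub_distrib]
  rw [← Finset.sum_smul, hw1, one_smul, ← Matrix.mul_sum, ← Matrix.sum_mul, ← Matrix.sum_mul,
    ← transpose_sum, ← hM]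
  abel

lemma posSemidef_transpose_mul_mul [Finite m] (hB : B.PosSemidef) (X : Matrix k m ℝ) :
    (Xᵀ * B * X).PosSemidef := by
  simpa [conjTranspose_eq_transpose_of_trivial] using hB.conjTranspose_mul_mul_same X

lemma posSemidef_weightedCov [Finite m] (hB : B.PosSemidef) (hw : ∀ i, 0 ≤ w i)
    (hw1 : ∑ i, w i = 1) (X : ι → Matrix k m ℝ) : (weightedCov B w X).PosSemidef := by
  rw [weightedCov_eq_sum hw1]
  exact posSemidef_sum _ fun i _ => (posSemidef_transpose_mul_mul hB _).smul (hw i)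

end WeightedCovariance

section WithinSubjectProjection

variable {p : ℕ} {S : Matrix (Fin p) (Fin p) ℝ}

lemma transpose_Btil (hS : S.PosDef) : (Btil S)ᵀ = Btil S := by
  have hinv : (S⁻¹)ᵀ = S⁻¹ := isHermitian_iff_isSymm.1 hS.inv.isHermitian
  simp [Btil, transpose_mul, hinv, transpose_Jmat, mul_assoc]

lemma dotProduct_Btil_mulVec (hS : S.PosDef) (z : Fin p → ℝ) :
    z ⬝ᵥ (Btil S *ᵥ z) = residualForm S⁻¹ 1 z := by
  have hinv : (S⁻¹).IsSymm := isHermitian_iff_isSymm.1 hS.inv.isHermitian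
  have hrank : S⁻¹ * Jmat p * S⁻¹ = vecMulVec (S⁻¹ *ᵥ 1) (S⁻¹ *ᵥ 1) := by
    rw [Jmat_eq_vecMulVec, mul_vecMulVec, vecMulVec_mul, ← mulVec_transpose, hinv.eq]
  change z ⬝ᵥ ((S⁻¹ - (1 ⬝ᵥ (S⁻¹ *ᵥ 1))⁻¹ • (S⁻¹ * Jmat p * S⁻¹)) *ᵥ z) = _
  rw [hrank, sub_mulVec, dotProduct_sub, smul_mulVec, dotProduct_smul, vecMulVec_mulVec,
    op_smul_eq_smul, dotProduct_smul, dotProduct_comm _ z, smul_eq_mul, smul_eq_mul, ← sq,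
    residualForm]

lemma posSemidef_Btil (hS : S.PosDef) : (Btil S).PosSemidef := by
  refine .of_dotProduct_mulVec_nonneg (isHermitian_iff_isSymm.2 (transpose_Btil hS)) fun z => ?_
  rw [star_trivial, dotProduct_Btil_mulVec hS]
  exact residualForm_nonneg hS.inv.posSemidef 1 z

end WithinSubjectProjection

section InformationMatrices

variable {p t n : ℕ} {S : Matrix (Fin p) (Fin p) ℝ} {w : TrtSeq p t → ℝ}

lemma Chat_eq (S : Matrix (Fin p) (Fin p) ℝ) (s : TrtSeq p t) (i j : Fin 2) :
    Chat S s i j = (Gmat i s * Bmat t)ᵀ * Btil S * (Gmat j s * Bmat t) := by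
  simp only [Chat, transpose_mul, transpose_Bmat, Matrix.mul_assoc]

lemma transpose_Chat (hS : S.PosDef) (s : TrtSeq p t) (i j : Fin 2) :
    (Chat S s i j)ᵀ = Chat S s j i := by
  simp only [Chat_eq, transpose_mul, transpose_Btil hS, transpose_transpose, Matrix.mul_assoc]

lemma transpose_ChatD (hS : S.PosDef) (n : ℕ) (w : TrtSeq p t → ℝ) (i j : Fin 2) :
    (ChatD n S w i j)ᵀ = ChatD n S w j i := by
  simp only [ChatD, transpose_smul, transpose_sum, transpose_Chat hS]

lemma transpose_CD (hS : S.PosDef) (n : ℕ) (w : TrtSeq p t → ℝ) (i j : Fin 2) :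
    (CD n S w i j)ᵀ = CD n S w j i := by
  simp only [CD, transpose_sub, transpose_ChatD hS, transpose_smul, transpose_mul,
    transpose_Btil hS, transpose_transpose, Matrix.mul_assoc]

lemma ChatD_mulVec_one (n : ℕ) (S : Matrix (Fin p) (Fin p) ℝ) (w : TrtSeq p t → ℝ)
    (i j : Fin 2) : ChatD n S w i j *ᵥ 1 = 0 := by
  simp only [ChatD, Chat, smul_mulVec, sum_mulVec, ← mulVec_mulVec, Bmat_mulVec_one, mulVec_zero,
    smul_zero, Finset.sum_const_zero]

lemma CD_mulVec_one (n : ℕ) (S : Matrix (Fin p) (Fin p) ℝ) (w : TrtSeq p t → ℝ)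
    (i j : Fin 2) : CD n S w i j *ᵥ 1 = 0 := by
  simp only [CD, sub_mulVec, ChatD_mulVec_one, smul_mulVec, ← mulVec_mulVec, sum_mulVec,
    Bmat_mulVec_one, mulVec_zero, smul_zero, Finset.sum_const_zero, sub_zero]

/-- The block combination `C₁₁ + x (C₁₂ + C₂₁) + x² C₂₂`, which is the direct-effect part of the
model when each carryover effect is `x` times the direct effect. -/
def atCarryover (C : Fin 2 → Fin 2 → Matrix (Fin t) (Fin t) ℝ) (x : ℝ) :
    Matrix (Fin t) (Fin t) ℝ :=
  C 0 0 + x • (C 0 1 + C 1 0) + x ^ 2 • C 1 1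

/-- The joint information matrix of direct and carryover effects, with blocks `C_{dij}`. -/
def jointInfo (n : ℕ) (S : Matrix (Fin p) (Fin p) ℝ) (w : TrtSeq p t → ℝ) :
    Matrix (Fin 2 × Fin t) (Fin 2 × Fin t) ℝ :=
  blockMatrix (CD n S w)

/-- The joint matrix with blocks `Ĉ_{dij}`. -/
def jointMoment (n : ℕ) (S : Matrix (Fin p) (Fin p) ℝ) (w : TrtSeq p t → ℝ) :
    Matrix (Fin 2 × Fin t) (Fin 2 × Fin t) ℝ :=
  blockMatrix (ChatD n S w)

/-- The matrix `[G₁(s) B_t, G₂(s) B_t]`. -/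
def jointDesign (s : TrtSeq p t) : Matrix (Fin p) (Fin 2 × Fin t) ℝ :=
  of fun k a => (Gmat a.1 s * Bmat t) k a.2

lemma jointMoment_eq_sum (n : ℕ) (S : Matrix (Fin p) (Fin p) ℝ) (w : TrtSeq p t → ℝ) :
    jointMoment n S w = (n : ℝ) • ∑ s, w s • ((jointDesign s)ᵀ * Btil S * jointDesign s) := by
  ext a b
  simp only [jointMoment, blockMatrix, of_apply, ChatD, Matrix.smul_apply, Matrix.sum_apply,
    Chat_eq]
  rfl

lemma jointMoment_sub_jointInfo (n : ℕ) (S : Matrix (Fin p) (Fin p) ℝ) (w : TrtSeq p t → ℝ) :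
    jointMoment n S w - jointInfo n S w = (n : ℝ) •
      ((∑ s, w s • jointDesign s)ᵀ * Btil S * ∑ s, w s • jointDesign s) := by
  have hblock (k : Fin p) (a : Fin 2 × Fin t) : (∑ s, w s • jointDesign s) k a =
      (∑ s, w s • (Gmat a.1 s * Bmat t)) k a.2 := by
    simp only [Matrix.sum_apply, Matrix.smul_apply]
    rfl
  ext a b
  simp only [Matrix.sub_apply, jointMoment, jointInfo, blockMatrix, of_apply, CD, sub_sub_cancel,
    Matrix.smul_apply, mul_apply, transpose_apply, hblock]

lemma posSemidef_jointInfo (hS : S.PosDef) (n : ℕ) (hw : IsDesign w) :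
    (jointInfo n S w).PosSemidef := by
  have hcov : jointInfo n S w = (n : ℝ) • weightedCov (Btil S) w jointDesign := by
    rw [weightedCov, smul_sub, ← jointMoment_eq_sum, ← jointMoment_sub_jointInfo, sub_sub_cancel]
  rw [hcov]
  exact (posSemidef_weightedCov (posSemidef_Btil hS) hw.1 hw.2 _).smul n.cast_nonneg

lemma posSemidef_jointMoment_sub_jointInfo (hS : S.PosDef) (n : ℕ) (w : TrtSeq p t → ℝ) :
    (jointMoment n S w - jointInfo n S w).PosSemidef := by
  rw [jointMoment_sub_jointInfo]
  exact (posSemidef_transpose_mul_mul (posSemidef_Btil hS) _).smul n.cast_nonneg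

lemma dotProduct_atCarryover_mulVec (C : Fin 2 → Fin 2 → Matrix (Fin t) (Fin t) ℝ) (x : ℝ)
    (v : Fin t → ℝ) :
    v ⬝ᵥ (atCarryover C x *ᵥ v) =
      tensorVec ![1, x] v ⬝ᵥ (blockMatrix C *ᵥ tensorVec ![1, x] v) := by
  simp only [tensorVec_dotProduct_blockMatrix_mulVec, Fin.sum_univ_two, cons_val_zero, cons_val_one,
    cons_val_fin_one, atCarryover, add_mulVec, smul_mulVec, dotProduct_add, dotProduct_smul,
    smul_eq_mul]
  ring

lemma jointInfo_form_carryover (n : ℕ) (S : Matrix (Fin p) (Fin p) ℝ) (w : TrtSeq p t → ℝ)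
    (τ : Fin t → ℝ) :
    tensorVec ![0, 1] τ ⬝ᵥ (jointInfo n S w *ᵥ tensorVec ![0, 1] τ) =
      τ ⬝ᵥ (CD n S w 1 1 *ᵥ τ) := by
  simp [jointInfo, tensorVec_dotProduct_blockMatrix_mulVec]

lemma jointInfo_form_le_jointMoment_form (hS : S.PosDef) (n : ℕ) (w : TrtSeq p t → ℝ)
    (z : Fin 2 × Fin t → ℝ) :
    z ⬝ᵥ (jointInfo n S w *ᵥ z) ≤ z ⬝ᵥ (jointMoment n S w *ᵥ z) := by
  have hnonneg := (posSemidef_jointMoment_sub_jointInfo hS n w).dotProduct_mulVec_nonneg z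
  rwa [star_trivial, sub_mulVec, dotProduct_sub, sub_nonneg] at hnonneg

/- `CInfo` is the Schur complement for the nuisance direction `(0, τ)` of the joint information,
compressed to the vectors `(v, l0 • v)`. -/
lemma dotProduct_CInfo_mulVec (hS : S.PosDef) (n : ℕ) (w : TrtSeq p t → ℝ) (τ : Fin t → ℝ)
    (l0 : ℝ) (v : Fin t → ℝ) :
    v ⬝ᵥ (CInfo n S w τ l0 *ᵥ v) =
      residualForm (jointInfo n S w) (tensorVec ![0, 1] τ) (tensorVec ![1, l0] v) := by
  set K := CD n S w 0 1 + l0 • CD n S w 1 1 with hK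
  have hKt : CD n S w 1 0 + l0 • CD n S w 1 1 = Kᵀ := by
    rw [hK, transpose_add, transpose_smul, transpose_CD hS, transpose_CD hS]
  have hcross : tensorVec ![1, l0] v ⬝ᵥ (jointInfo n S w *ᵥ tensorVec ![0, 1] τ) =
      v ⬝ᵥ (K *ᵥ τ) := by
    simp [jointInfo, tensorVec_dotProduct_blockMatrix_mulVec, hK, add_mulVec, smul_mulVec]
  have hrank : K * vecMulVec τ τ * Kᵀ = vecMulVec (K *ᵥ τ) (K *ᵥ τ) := by
    rw [mul_vecMulVec, vecMulVec_mul, vecMul_transpose]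
  have hCInfo : CInfo n S w τ l0 = atCarryover (CD n S w) l0 -
      (τ ⬝ᵥ (CD n S w 1 1 *ᵥ τ))⁻¹ • vecMulVec (K *ᵥ τ) (K *ᵥ τ) := by
    rw [← hrank, ← hKt]
    rfl
  rw [hCInfo, sub_mulVec, dotProduct_sub, dotProduct_atCarryover_mulVec, residualForm,
    jointInfo_form_carryover, hcross, smul_mulVec, vecMulVec_mulVec, op_smul_eq_smul,
    dotProduct_smul, dotProduct_smul, dotProduct_comm _ v, smul_eq_mul, smul_eq_mul, ← sq,
    jointInfo]

lemma CInfo_mulVec_one (n : ℕ) (S : Matrix (Fin p) (Fin p) ℝ) (w : TrtSeq p t → ℝ)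
    (τ : Fin t → ℝ) (l0 : ℝ) : CInfo n S w τ l0 *ᵥ 1 = 0 := by
  simp [CInfo, add_mulVec, sub_mulVec, smul_mulVec, CD_mulVec_one, ← mulVec_mulVec]

lemma transpose_atCarryover {C : Fin 2 → Fin 2 → Matrix (Fin t) (Fin t) ℝ}
    (hC : ∀ i j, (C i j)ᵀ = C j i) (x : ℝ) : (atCarryover C x)ᵀ = atCarryover C x := by
  simp only [atCarryover, transpose_add, transpose_smul, hC, add_comm (C 1 0)]

lemma transpose_CInfo (hS : S.PosDef) (n : ℕ) (w : TrtSeq p t → ℝ) (τ : Fin t → ℝ) (l0 : ℝ) :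
    (CInfo n S w τ l0)ᵀ = CInfo n S w τ l0 := by
  simp only [CInfo, transpose_add, transpose_sub, transpose_smul, transpose_mul,
    transpose_CD hS, transpose_vecMulVec, add_comm (CD n S w 1 0) (CD n S w 0 1), mul_assoc]

lemma posSemidef_CInfo (hS : S.PosDef) (n : ℕ) (hw : IsDesign w) (τ : Fin t → ℝ) (l0 : ℝ) :
    (CInfo n S w τ l0).PosSemidef := by
  refine .of_dotProduct_mulVec_nonneg
    (isHermitian_iff_isSymm.2 (transpose_CInfo hS n w τ l0)) fun v => ?_
  rw [star_trivial, dotProduct_CInfo_mulVec hS]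
  exact residualForm_nonneg (posSemidef_jointInfo hS n hw) _ _

variable {τ : Fin t → ℝ}

lemma CInfo_form_le_jointMoment_form (hS : S.PosDef) (hw : IsDesign w)
    (hτ : 0 < τ ⬝ᵥ (CD n S w 1 1 *ᵥ τ)) (l0 c : ℝ) (v : Fin t → ℝ) :
    v ⬝ᵥ (CInfo n S w τ l0 *ᵥ v) ≤ (tensorVec ![1, l0] v + c • tensorVec ![0, 1] τ) ⬝ᵥ
      (jointMoment n S w *ᵥ (tensorVec ![1, l0] v + c • tensorVec ![0, 1] τ)) := by
  rw [dotProduct_CInfo_mulVec hS]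
  exact (residualForm_le (isHermitian_iff_isSymm.1 (posSemidef_jointInfo hS n hw).isHermitian)
    (by rwa [jointInfo_form_carryover]) _ c).trans (jointInfo_form_le_jointMoment_form hS n w _)

lemma posSemidef_atCarryover_sub_CInfo (hS : S.PosDef) (hw : IsDesign w)
    (hτ : 0 < τ ⬝ᵥ (CD n S w 1 1 *ᵥ τ)) (l0 : ℝ) :
    (atCarryover (ChatD n S w) l0 - CInfo n S w τ l0).PosSemidef := by
  refine .of_dotProduct_mulVec_nonneg (isHermitian_iff_isSymm.2 ?_) fun v => ?_
  · rw [IsSymm, transpose_sub, transpose_atCarryover (transpose_ChatD hS n w),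
      transpose_CInfo hS]
  · have hle := CInfo_form_le_jointMoment_form hS hw hτ l0 0 v
    rw [zero_smul, add_zero, jointMoment, ← dotProduct_atCarryover_mulVec] at hle
    rwa [star_trivial, sub_mulVec, dotProduct_sub, sub_nonneg]

lemma rayleigh_CInfo_le (hS : S.PosDef) (hw : IsDesign w)
    (hτ : 0 < τ ⬝ᵥ (CD n S w 1 1 *ᵥ τ)) (l0 x : ℝ) :
    rayleigh (CInfo n S w τ l0) τ ≤ rayleigh (atCarryover (ChatD n S w) x) τ := by
  have hvec : tensorVec ![1, l0] τ + (x - l0) • tensorVec ![0, 1] τ = tensorVec ![1, x] τ := by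
    ext ⟨i, k⟩
    fin_cases i
    · simp [tensorVec]
    · simp only [Fin.mk_one, Fin.isValue, Pi.add_apply, Pi.smul_apply, tensorVec, cons_val_one,
        cons_val_fin_one, one_mul, smul_eq_mul]
      ring
  have hle := CInfo_form_le_jointMoment_form hS hw hτ l0 (x - l0) τ
  rw [hvec, jointMoment, ← dotProduct_atCarryover_mulVec] at hle
  exact div_le_div_of_nonneg_right hle (by simpa using dotProduct_star_self_nonneg τ)

end InformationMatrices

section TraceCriteria

variable {p t n : ℕ} {S : Matrix (Fin p) (Fin p) ℝ} {w : TrtSeq p t → ℝ}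

lemma atCarryover_Chat (S : Matrix (Fin p) (Fin p) ℝ) (s : TrtSeq p t) (x : ℝ) :
    atCarryover (Chat S s) x = ((Gmat 0 s + x • Gmat 1 s) * Bmat t)ᵀ * Btil S *
      ((Gmat 0 s + x • Gmat 1 s) * Bmat t) := by
  simp only [atCarryover, Chat_eq, Matrix.add_mul, Matrix.mul_add, transpose_add, smul_mul,
    Matrix.mul_smul, transpose_smul, smul_add, smul_smul, sq]
  abel

lemma trace_atCarryover_Chat (hS : S.PosDef) (s : TrtSeq p t) (x : ℝ) :
    (atCarryover (Chat S s) x).trace = qSeq S s x := by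
  have hsymm : cseq S s 1 0 = cseq S s 0 1 := by
    rw [cseq, ← trace_transpose, transpose_Chat hS, cseq]
  simp only [atCarryover, trace_add, trace_smul, smul_eq_mul]
  change cseq S s 0 0 + x * (cseq S s 0 1 + cseq S s 1 0) + x ^ 2 * cseq S s 1 1 = _
  rw [hsymm, qSeq]
  ring

lemma qSeq_nonneg (hS : S.PosDef) (s : TrtSeq p t) (x : ℝ) : 0 ≤ qSeq S s x := by
  rw [← trace_atCarryover_Chat hS, atCarryover_Chat]
  exact (posSemidef_transpose_mul_mul (posSemidef_Btil hS) _).trace_nonneg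

lemma cseq_self_nonneg (hS : S.PosDef) (s : TrtSeq p t) (i : Fin 2) : 0 ≤ cseq S s i i := by
  rw [cseq, Chat_eq]
  exact (posSemidef_transpose_mul_mul (posSemidef_Btil hS) _).trace_nonneg

lemma qD_nonneg (hS : S.PosDef) (hw : IsDesign w) (x : ℝ) : 0 ≤ qD S w x :=
  Finset.sum_nonneg fun s _ => mul_nonneg (hw.1 s) (qSeq_nonneg hS s x)

lemma atCarryover_ChatD (n : ℕ) (S : Matrix (Fin p) (Fin p) ℝ) (w : TrtSeq p t → ℝ) (x : ℝ) :
    atCarryover (ChatD n S w) x = (n : ℝ) • ∑ s, w s • atCarryover (Chat S s) x := by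
  simp only [atCarryover, ChatD, smul_add, Finset.sum_add_distrib, Finset.smul_sum,
    smul_comm x, smul_comm (x ^ 2)]

lemma trace_atCarryover_ChatD (hS : S.PosDef) (n : ℕ) (w : TrtSeq p t → ℝ) (x : ℝ) :
    (atCarryover (ChatD n S w) x).trace = n * qD S w x := by
  simp only [atCarryover_ChatD, trace_smul, trace_sum, trace_atCarryover_Chat hS, smul_eq_mul, qD]

lemma atCarryover_ChatD_mulVec_one (n : ℕ) (S : Matrix (Fin p) (Fin p) ℝ) (w : TrtSeq p t → ℝ)
    (x : ℝ) : atCarryover (ChatD n S w) x *ᵥ 1 = 0 := by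
  simp only [atCarryover, add_mulVec, smul_mulVec, ChatD_mulVec_one, add_zero, smul_zero]

lemma cD_eq_sum (n : ℕ) (S : Matrix (Fin p) (Fin p) ℝ) (w : TrtSeq p t → ℝ) (i j : Fin 2) :
    cD n S w i j = n * ∑ s, w s * cseq S s i j := by
  simp only [cD, ChatD, trace_smul, trace_sum, smul_eq_mul, cseq]

lemma cD_self_nonneg (hS : S.PosDef) (n : ℕ) (hw : IsDesign w) (i : Fin 2) :
    0 ≤ cD n S w i i := by
  rw [cD_eq_sum]
  exact mul_nonneg n.cast_nonneg
    (Finset.sum_nonneg fun s _ => mul_nonneg (hw.1 s) (cseq_self_nonneg hS s i))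

lemma natCast_mul_qD (n : ℕ) (S : Matrix (Fin p) (Fin p) ℝ) (w : TrtSeq p t → ℝ) (x : ℝ) :
    n * qD S w x = cD n S w 0 0 + 2 * cD n S w 0 1 * x + cD n S w 1 1 * x ^ 2 := by
  have hexpand (s) : w s * qSeq S s x =
      w s * cseq S s 0 0 + w s * cseq S s 0 1 * (2 * x) + w s * cseq S s 1 1 * x ^ 2 := by
    rw [qSeq]
    ring
  simp only [qD, hexpand, Finset.sum_add_distrib, ← Finset.sum_mul, cD_eq_sum]
  ring

lemma natCast_mul_qD_sub_qD_xD (hc : cD n S w 1 1 ≠ 0) (x : ℝ) :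
    n * qD S w x - n * qD S w (xD n S w) =
      (cD n S w 0 1 + x * cD n S w 1 1) ^ 2 / cD n S w 1 1 := by
  rw [natCast_mul_qD, natCast_mul_qD, xD]
  field_simp
  ring

lemma natCast_pos_of_cD_pos {i j : Fin 2} (hc : 0 < cD n S w i j) : (0 : ℝ) < n := by
  refine Nat.cast_pos.2 (Nat.pos_of_ne_zero fun hn => hc.ne' ?_)
  rw [cD_eq_sum, hn, Nat.cast_zero, zero_mul]

lemma qD_xD_le (hc : 0 < cD n S w 1 1) (x : ℝ) : qD S w (xD n S w) ≤ qD S w x := by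
  refine le_of_mul_le_mul_left (sub_nonneg.1 ?_) (natCast_pos_of_cD_pos hc)
  rw [natCast_mul_qD_sub_qD_xD hc.ne']
  exact div_nonneg (sq_nonneg _) hc.le

variable {g : Measure (Fin t → ℝ)} {l0 : ℝ}

/- The pointwise bound involves the trace of `CInfo` and its Rayleigh quotient at `τ`. Both are
controlled by the moment matrices, whose Rayleigh quotients exchangeability averages out. -/
lemma rpow_mul_phiCrit_le (ht : 2 ≤ t) (hS : S.PosDef) (hg : IsExchangeablePrior g)
    (hw : PhiAdmissible n S PhiD g l0 w) (x : ℝ) {r : ℝ} (hr : 0 ≤ r) :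
    r ^ ((t : ℝ) - 1)⁻¹ * PhiCrit n S PhiD g l0 w ≤
      n * ((t - 2) * qD S w l0 + r * qD S w x) / (t - 1) ^ 2 := by
  have := hg.1
  have ht1 := natCast_sub_one_pos ht
  obtain ⟨hdes, hpos, hint⟩ := hw
  set M := atCarryover (ChatD n S w)
  have hMint (y : ℝ) : ∫ τ, rayleigh (M y) τ ∂g = n * qD S w y / (t - 1) := by
    rw [hg.integral_rayleigh ht (atCarryover_ChatD_mulVec_one n S w y),
      trace_atCarryover_ChatD hS]
  have hpointwise : ∀ᵐ τ ∂g, r ^ ((t : ℝ) - 1)⁻¹ * PhiD (CInfo n S w τ l0) ≤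
      (n * qD S w l0 - rayleigh (M l0) τ + r * rayleigh (M x) τ) / (t - 1) := by
    filter_upwards [hg.ae_sum_eq_zero_and_ne_zero, hpos] with τ hτ hτpos
    have htrace := rayleigh_le_trace hτ.2 (posSemidef_atCarryover_sub_CInfo hS hdes hτpos l0)
    rw [rayleigh_sub, trace_sub, trace_atCarryover_ChatD hS] at htrace
    have hray := mul_le_mul_of_nonneg_left (rayleigh_CInfo_le hS hdes hτpos l0 x) hr
    refine (rpow_mul_PhiD_le ht hτ.1 hτ.2 (posSemidef_CInfo hS n hdes τ l0)
      (CInfo_mulVec_one n S w τ l0) hr).trans (div_le_div_of_nonneg_right ?_ ht1.le)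
    linarith
  have hM (y : ℝ) : Integrable (rayleigh (M y)) g := integrable_rayleigh _
  have hconst : Integrable (fun τ => n * qD S w l0 - rayleigh (M l0) τ) g :=
    (integrable_const _).sub (hM l0)
  calc r ^ ((t : ℝ) - 1)⁻¹ * PhiCrit n S PhiD g l0 w
      = ∫ τ, r ^ ((t : ℝ) - 1)⁻¹ * PhiD (CInfo n S w τ l0) ∂g := (integral_const_mul _ _).symm
    _ ≤ ∫ τ, (n * qD S w l0 - rayleigh (M l0) τ + r * rayleigh (M x) τ) / (t - 1) ∂g :=
      integral_mono_ae (hint.const_mul _) ((hconst.add ((hM x).const_mul r)).div_const _)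
        hpointwise
    _ = (n * qD S w l0 - n * qD S w l0 / (t - 1) + r * (n * qD S w x / (t - 1))) / (t - 1) := by
      rw [integral_div, integral_add hconst ((hM x).const_mul r),
        integral_sub (integrable_const _) (hM l0), integral_const, integral_const_mul r, hMint,
        hMint, probReal_univ, one_smul]
    _ = n * ((t - 2) * qD S w l0 + r * qD S w x) / (t - 1) ^ 2 := by
      field_simp
      ring

end TraceCriteria

section EquireplicatedDesigns

variable {p t n : ℕ} {S : Matrix (Fin p) (Fin p) ℝ} {w v : TrtSeq p t → ℝ}

/-- The first condition of pseudo symmetry: each treatment is equally frequent in each period. -/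
def IsEquireplicated (w : TrtSeq p t → ℝ) : Prop :=
  ∀ (k : Fin p) (i : Fin t),
    ∑ s ∈ Finset.univ.filter (fun s : TrtSeq p t => s k = i), w s = 1 / (t : ℝ)

namespace IsEquireplicated

lemma convexComb (hw : IsEquireplicated w) (hv : IsEquireplicated v) (e : ℝ) :
    IsEquireplicated ((1 - e) • w + e • v) := by
  intro k i
  simp only [Pi.add_apply, Pi.smul_apply, smul_eq_mul, Finset.sum_add_distrib, ← Finset.mul_sum,
    hw k i, hv k i]
  ring

lemma sum_smul_Gmat (hw : IsEquireplicated w) (i : Fin 2) :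
    ∃ c : Fin p → ℝ, ∑ s, w s • Gmat i s = vecMulVec c 1 := by
  have hfreq (k : Fin p) (a : Fin t) : ∑ s, w s * (if s k = a then 1 else 0) = 1 / (t : ℝ) := by
    simp only [mul_ite, mul_one, mul_zero, ← Finset.sum_filter, hw k a]
  refine ⟨fun k => if i ≠ 0 ∧ (k : ℕ) = 0 then 0 else 1 / (t : ℝ), ?_⟩
  ext k a
  simp only [Matrix.sum_apply, Matrix.smul_apply, smul_eq_mul, vecMulVec_apply, Pi.one_apply,
    mul_one, Gmat]
  by_cases hi : i = 0
  · simp only [hi, if_true, Tmat, of_apply, hfreq, ne_eq, not_true, false_and, if_false]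
  · by_cases hk : (k : ℕ) = 0
    · simp [hi, Fmat, hk]
    · simp only [hi, hk, if_false, Fmat, of_apply, hfreq, and_false]

lemma sum_smul_Gmat_mul_Bmat (hw : IsEquireplicated w) (i : Fin 2) :
    ∑ s, w s • (Gmat i s * Bmat t) = 0 := by
  obtain ⟨c, hc⟩ := hw.sum_smul_Gmat i
  simp only [← smul_mul, ← Matrix.sum_mul, hc, vecMulVec_mul]
  rw [← mulVec_transpose, transpose_Bmat, Bmat_mulVec_one]
  ext k a
  simp only [vecMulVec_apply, Pi.zero_apply, Matrix.zero_apply, mul_zero]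

lemma CD_eq_ChatD (hw : IsEquireplicated w) (n : ℕ) (S : Matrix (Fin p) (Fin p) ℝ)
    (i j : Fin 2) : CD n S w i j = ChatD n S w i j := by
  rw [CD, hw.sum_smul_Gmat_mul_Bmat j, Matrix.mul_zero, smul_zero, sub_zero]

end IsEquireplicated

end EquireplicatedDesigns

section PseudoSymmetricDesigns

variable {p t n : ℕ} {S : Matrix (Fin p) (Fin p) ℝ} {w v : TrtSeq p t → ℝ}

lemma submatrix_smul_one_add_smul_Jmat (a b : ℝ) (σ : Equiv.Perm (Fin t)) :
    (a • (1 : Matrix (Fin t) (Fin t) ℝ) + b • Jmat t).submatrix σ σ =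
      a • (1 : Matrix (Fin t) (Fin t) ℝ) + b • Jmat t := by
  rw [submatrix_add, submatrix_smul, submatrix_smul]
  simp only [Pi.add_apply, Pi.smul_apply, submatrix_one_equiv]
  rfl

lemma isDesign_convexComb (hw : IsDesign w) (hv : IsDesign v) {e : ℝ} (he : e ∈ Set.Icc 0 1) :
    IsDesign ((1 - e) • w + e • v) :=
  convex_stdSimplex ℝ (TrtSeq p t) hw hv (sub_nonneg.2 he.2) he.1 (sub_add_cancel _ _)

lemma ChatD_convexComb (n : ℕ) (S : Matrix (Fin p) (Fin p) ℝ) (w v : TrtSeq p t → ℝ) (e : ℝ)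
    (i j : Fin 2) :
    ChatD n S ((1 - e) • w + e • v) i j = (1 - e) • ChatD n S w i j + e • ChatD n S v i j := by
  simp only [ChatD, Pi.add_apply, Pi.smul_apply, smul_eq_mul, add_smul, mul_smul,
    Finset.sum_add_distrib, ← Finset.smul_sum, smul_add, smul_comm (n : ℝ)]

lemma cD_convexComb (n : ℕ) (S : Matrix (Fin p) (Fin p) ℝ) (w v : TrtSeq p t → ℝ) (e : ℝ)
    (i j : Fin 2) :
    cD n S ((1 - e) • w + e • v) i j = (1 - e) * cD n S w i j + e * cD n S v i j := by
  simp only [cD, ChatD_convexComb, trace_add, trace_smul, smul_eq_mul]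

lemma qD_convexComb (S : Matrix (Fin p) (Fin p) ℝ) (w v : TrtSeq p t → ℝ) (e x : ℝ) :
    qD S ((1 - e) • w + e • v) x = (1 - e) * qD S w x + e * qD S v x := by
  simp only [qD, Pi.add_apply, Pi.smul_apply, smul_eq_mul, add_mul, mul_assoc,
    Finset.sum_add_distrib, ← Finset.mul_sum]

namespace IsPseudoSymmetric

lemma isEquireplicated (hw : IsPseudoSymmetric n S w) : IsEquireplicated w := hw.1

lemma convexComb (hw : IsPseudoSymmetric n S w) (hv : IsPseudoSymmetric n S v) (e : ℝ) :
    IsPseudoSymmetric n S ((1 - e) • w + e • v) := by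
  have hrep := hw.isEquireplicated.convexComb hv.isEquireplicated e
  refine ⟨hrep, fun i j => ?_⟩
  obtain ⟨a, b, hab⟩ := hw.2 i j
  obtain ⟨c, d, hcd⟩ := hv.2 i j
  refine ⟨(1 - e) * a + e * c, (1 - e) * b + e * d, ?_⟩
  rw [hrep.CD_eq_ChatD, ChatD_convexComb, ← hw.isEquireplicated.CD_eq_ChatD,
    ← hv.isEquireplicated.CD_eq_ChatD, hab, hcd]
  module

lemma CD_eq (ht : 2 ≤ t) (hw : IsPseudoSymmetric n S w) (i j : Fin 2) :
    CD n S w i j = (cD n S w i j / (t - 1)) • Bmat t := by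
  rw [cD, ← hw.isEquireplicated.CD_eq_ChatD]
  refine eq_smul_Bmat ht (fun σ => ?_) (CD_mulVec_one n S w i j)
  obtain ⟨a, b, hab⟩ := hw.2 i j
  rw [hab, submatrix_smul_one_add_smul_Jmat]

variable {τ : Fin t → ℝ} {l0 : ℝ}

lemma dotProduct_CD_mulVec_pos (ht : 2 ≤ t) (hw : IsPseudoSymmetric n S w)
    (hc : 0 < cD n S w 1 1) (hτ0 : ∑ i, τ i = 0) (hτ : τ ≠ 0) :
    0 < τ ⬝ᵥ (CD n S w 1 1 *ᵥ τ) := by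
  rw [hw.CD_eq ht, smul_mulVec, Bmat_mulVec_of_sum_eq_zero hτ0, dotProduct_smul, smul_eq_mul]
  exact mul_pos (div_pos hc (natCast_sub_one_pos ht)) (dotProduct_self_pos hτ)

lemma CInfo_eq (ht : 2 ≤ t) (hS : S.PosDef) (hw : IsPseudoSymmetric n S w)
    (hc : 0 < cD n S w 1 1) (hq : qD S w l0 ≠ 0) (hτ0 : ∑ i, τ i = 0) :
    CInfo n S w τ l0 = (n * qD S w l0 / (t - 1)) •
      (dilation τ (qD S w (xD n S w) / qD S w l0) - (t : ℝ)⁻¹ • Jmat t) := by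
  have ht1 := natCast_sub_one_pos ht
  have hsymm : cD n S w 1 0 = cD n S w 0 1 := by
    rw [cD, ← trace_transpose, transpose_ChatD hS, cD]
  have hτB : Bmat t *ᵥ τ = τ := Bmat_mulVec_of_sum_eq_zero hτ0
  have hBVB : Bmat t * vecMulVec τ τ * Bmat t = vecMulVec τ τ := by
    rw [mul_vecMulVec, vecMulVec_mul, ← mulVec_transpose, transpose_Bmat, hτB]
  have hCInfo : CInfo n S w τ l0 = (n * qD S w l0 / (t - 1)) • Bmat t -
      ((cD n S w 0 1 + l0 * cD n S w 1 1) ^ 2 / cD n S w 1 1 / (t - 1) * (τ ⬝ᵥ τ)⁻¹) •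
        vecMulVec τ τ := by
    have hκ (a b : ℝ) : (a • Bmat t + l0 • b • Bmat t) * vecMulVec τ τ *
        (a • Bmat t + l0 • b • Bmat t) = (a + l0 * b) ^ 2 • vecMulVec τ τ := by
      rw [smul_smul, ← add_smul, smul_mul, smul_mul, Matrix.mul_smul, hBVB, smul_smul, sq]
    simp only [CInfo, hw.CD_eq ht, hsymm, hκ]
    simp only [smul_mulVec, hτB, dotProduct_smul, smul_eq_mul, mul_inv, natCast_mul_qD, smul_smul,
      ← add_smul]
    congr 2
    · ring
    · field_simp
  have hcoef : (cD n S w 0 1 + l0 * cD n S w 1 1) ^ 2 / cD n S w 1 1 / (t - 1) =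
      n * qD S w l0 / (t - 1) * (1 - qD S w (xD n S w) / qD S w l0) := by
    rw [← natCast_mul_qD_sub_qD_xD hc.ne']
    field_simp
  rw [hCInfo, hcoef, dilation, Bmat]
  module

lemma det_CInfo_add_Jmat (ht : 2 ≤ t) (hS : S.PosDef) (hw : IsPseudoSymmetric n S w)
    (hc : 0 < cD n S w 1 1) (hq : qD S w l0 ≠ 0) (hτ0 : ∑ i, τ i = 0) (hτ : τ ≠ 0) :
    (CInfo n S w τ l0 + (t : ℝ)⁻¹ • Jmat t).det =
      (n * qD S w l0 / (t - 1)) ^ (t - 1) * (qD S w (xD n S w) / qD S w l0) := by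
  have : NeZero t := ⟨by omega⟩
  have ht0 : (t : ℝ) ≠ 0 := NeZero.ne _
  have hn := natCast_pos_of_cD_pos hc
  set a := n * qD S w l0 / ((t : ℝ) - 1)
  have ha : a ≠ 0 := div_ne_zero (mul_ne_zero hn.ne' hq) (natCast_sub_one_pos ht).ne'
  set ρ := qD S w (xD n S w) / qD S w l0
  have hJ : dilation τ ρ * Jmat t = Jmat t := by
    rw [Jmat_eq_vecMulVec, mul_vecMulVec, dilation_mulVec_one hτ0]
  have hfactor : CInfo n S w τ l0 + (t : ℝ)⁻¹ • Jmat t =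
      a • (dilation τ ρ * (1 + ((a⁻¹ - 1) * (t : ℝ)⁻¹) • Jmat t)) := by
    rw [hw.CInfo_eq ht hS hc hq hτ0, mul_add, mul_one, mul_smul_comm, hJ]
    change a • (dilation τ ρ - _) + _ = _
    clear_value a
    match_scalars <;> field_simp
    ring
  rw [hfactor, det_smul, det_mul, det_dilation hτ, Jmat_eq_vecMulVec, det_one_add_smul_vecMulVec,
    one_dotProduct_one, Fintype.card_fin, inv_mul_cancel_right₀ ht0, add_sub_cancel,
    ← mul_pow_sub_one (NeZero.ne t) a]
  field_simp

lemma PhiD_CInfo (ht : 2 ≤ t) (hS : S.PosDef) (hdes : IsDesign w)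
    (hw : IsPseudoSymmetric n S w) (hc : 0 < cD n S w 1 1) (hq : qD S w l0 ≠ 0)
    (hτ0 : ∑ i, τ i = 0) (hτ : τ ≠ 0) :
    PhiD (CInfo n S w τ l0) =
      n * qD S w l0 / (t - 1) * (qD S w (xD n S w) / qD S w l0) ^ ((t : ℝ) - 1)⁻¹ := by
  have : NeZero t := ⟨by omega⟩
  have ht1 := natCast_sub_one_pos ht
  have hA := qD_nonneg hS hdes l0
  have hB := qD_nonneg hS hdes (xD n S w)
  rw [PhiD_eq_det_rpow (posSemidef_CInfo hS n hdes τ l0) (CInfo_mulVec_one n S w τ l0),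
    hw.det_CInfo_add_Jmat ht hS hc hq hτ0 hτ, Real.mul_rpow (by positivity) (by positivity),
    ← Nat.cast_pred (by omega), Real.pow_rpow_inv_natCast (by positivity) (by omega)]

variable {g : Measure (Fin t → ℝ)}

lemma ae_PhiD_CInfo_eq (ht : 2 ≤ t) (hS : S.PosDef) (hg : IsExchangeablePrior g)
    (hdes : IsDesign w) (hw : IsPseudoSymmetric n S w) (hc : 0 < cD n S w 1 1)
    (hq : qD S w l0 ≠ 0) :
    (fun τ => PhiD (CInfo n S w τ l0)) =ᵐ[g] fun _ =>
      n * qD S w l0 / (t - 1) * (qD S w (xD n S w) / qD S w l0) ^ ((t : ℝ) - 1)⁻¹ := by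
  filter_upwards [hg.ae_sum_eq_zero_and_ne_zero] with τ hτ
  exact hw.PhiD_CInfo ht hS hdes hc hq hτ.1 hτ.2

lemma phiAdmissible (ht : 2 ≤ t) (hS : S.PosDef) (hg : IsExchangeablePrior g)
    (hdes : IsDesign w) (hw : IsPseudoSymmetric n S w) (hc : 0 < cD n S w 1 1)
    (hq : qD S w l0 ≠ 0) : PhiAdmissible n S PhiD g l0 w := by
  have := hg.1
  refine ⟨hdes, ?_,
    (integrable_congr (hw.ae_PhiD_CInfo_eq ht hS hg hdes hc hq)).2 (integrable_const _)⟩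
  filter_upwards [hg.ae_sum_eq_zero_and_ne_zero] with τ hτ
  exact hw.dotProduct_CD_mulVec_pos ht hc hτ.1 hτ.2

lemma phiCrit_eq (ht : 2 ≤ t) (hS : S.PosDef) (hg : IsExchangeablePrior g)
    (hdes : IsDesign w) (hw : IsPseudoSymmetric n S w) (hc : 0 < cD n S w 1 1)
    (hq : qD S w l0 ≠ 0) :
    PhiCrit n S PhiD g l0 w =
      n * qD S w l0 / (t - 1) * (qD S w (xD n S w) / qD S w l0) ^ ((t : ℝ) - 1)⁻¹ := by
  have := hg.1
  rw [PhiCrit, integral_congr_ae (hw.ae_PhiD_CInfo_eq ht hS hg hdes hc hq), integral_const,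
    probReal_univ, one_smul]

end IsPseudoSymmetric

end PseudoSymmetricDesigns

section Relabelling

variable {p t n : ℕ} {S : Matrix (Fin p) (Fin p) ℝ} {v : TrtSeq p t → ℝ}

lemma sum_comp_permSeq {M : Type*} [AddCommMonoid M] (σ : Equiv.Perm (Fin t))
    (f : TrtSeq p t → M) : ∑ s, f (permSeq σ s) = ∑ s, f s :=
  (Equiv.piCongrRight fun _ => σ).sum_comp f

lemma Gmat_permSeq (i : Fin 2) (σ : Equiv.Perm (Fin t)) (s : TrtSeq p t) :
    Gmat i (permSeq σ s) = (Gmat i s).submatrix id σ.symm := by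
  ext k a
  by_cases hi : i = 0 <;> simp [Gmat, hi, Tmat, Fmat, permSeq, ← Equiv.eq_symm_apply]

lemma submatrix_Bmat (σ : Equiv.Perm (Fin t)) : (Bmat t).submatrix σ σ = Bmat t := by
  ext a b
  simp [Bmat, Jmat, Matrix.one_apply]

lemma Chat_permSeq (S : Matrix (Fin p) (Fin p) ℝ) (σ : Equiv.Perm (Fin t)) (s : TrtSeq p t)
    (i j : Fin 2) : Chat S (permSeq σ s) i j = (Chat S s i j).submatrix σ.symm σ.symm := by
  have hcenter (i : Fin 2) : Gmat i (permSeq σ s) * Bmat t =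
      (Gmat i s * Bmat t).submatrix id σ.symm := by
    rw [Gmat_permSeq, ← submatrix_Bmat σ.symm, submatrix_mul_equiv, submatrix_Bmat]
  rw [Chat_eq, Chat_eq, hcenter, hcenter]
  rfl

lemma cseq_permSeq (S : Matrix (Fin p) (Fin p) ℝ) (σ : Equiv.Perm (Fin t)) (s : TrtSeq p t)
    (i j : Fin 2) : cseq S (permSeq σ s) i j = cseq S s i j := by
  rw [cseq, Chat_permSeq]
  exact σ.symm.sum_comp fun a => Chat S s i j a a

lemma qSeq_permSeq (S : Matrix (Fin p) (Fin p) ℝ) (σ : Equiv.Perm (Fin t)) (s : TrtSeq p t)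
    (x : ℝ) : qSeq S (permSeq σ s) x = qSeq S s x := by
  simp only [qSeq, cseq_permSeq]

namespace IsSymmetricDesign

lemma isEquireplicated (hv : IsSymmetricDesign v) (hdes : IsDesign v) :
    IsEquireplicated v := by
  intro k i
  have hconst (a : Fin t) : ∑ s with s k = a, v s = ∑ s with s k = i, v s := by
    simp only [Finset.sum_filter]
    rw [← sum_comp_permSeq (Equiv.swap i a)]
    refine Finset.sum_congr rfl fun s _ => ?_
    rw [hv]
    simp only [permSeq, Equiv.swap_apply_eq_iff, Equiv.swap_apply_right]
  have htotal : (t : ℝ) * ∑ s with s k = i, v s = 1 := by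
    calc (t : ℝ) * ∑ s with s k = i, v s = ∑ a, ∑ s with s k = a, v s := by
          simp only [hconst, Finset.sum_const, Finset.card_univ, Fintype.card_fin, nsmul_eq_mul]
      _ = ∑ s, v s := Finset.sum_fiberwise _ (fun s => s k) v
      _ = 1 := hdes.2
  exact eq_one_div_of_mul_eq_one_right htotal

lemma submatrix_ChatD (hv : IsSymmetricDesign v) (n : ℕ) (S : Matrix (Fin p) (Fin p) ℝ)
    (i j : Fin 2) (σ : Equiv.Perm (Fin t)) :
    (ChatD n S v i j).submatrix σ σ = ChatD n S v i j := by
  rw [ChatD]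
  conv_rhs => rw [← sum_comp_permSeq σ.symm]
  ext a b
  simp only [submatrix_apply, Matrix.smul_apply, Matrix.sum_apply, hv σ.symm, Chat_permSeq,
    Equiv.symm_symm]

lemma isPseudoSymmetric (ht : 2 ≤ t) (hv : IsSymmetricDesign v) (hdes : IsDesign v) (n : ℕ)
    (S : Matrix (Fin p) (Fin p) ℝ) : IsPseudoSymmetric n S v := by
  have hrep := hv.isEquireplicated hdes
  refine ⟨hrep, fun i j => ⟨cD n S v i j / (t - 1), -(cD n S v i j / (t - 1) * (t : ℝ)⁻¹), ?_⟩⟩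
  rw [hrep.CD_eq_ChatD, eq_smul_Bmat ht (hv.submatrix_ChatD n S i j) (ChatD_mulVec_one n S v i j),
    Bmat, cD]
  module

end IsSymmetricDesign

lemma symmetrize_dotProduct (v : TrtSeq p t → ℝ) {f : TrtSeq p t → ℝ}
    (hf : ∀ σ s, f (permSeq σ s) = f s) : symmetrize v ⬝ᵥ f = v ⬝ᵥ f := by
  have hσ (σ : Equiv.Perm (Fin t)) : ∑ s, permDesign σ v s * f s = ∑ s, v s * f s := by
    rw [← sum_comp_permSeq σ⁻¹ fun s => v s * f s]
    simp only [permDesign, hf]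
  simp only [dotProduct, symmetrize, mul_assoc, Finset.sum_mul, ← Finset.mul_sum]
  rw [Finset.sum_comm]
  simp only [hσ, Finset.sum_const, Finset.card_univ, Fintype.card_perm, Fintype.card_fin,
    nsmul_eq_mul]
  exact inv_mul_cancel_left₀ (Nat.cast_ne_zero.2 t.factorial_ne_zero) _

lemma isDesign_symmetrize (hv : IsDesign v) : IsDesign (symmetrize v) := by
  refine ⟨fun s => mul_nonneg (by positivity) (Finset.sum_nonneg fun σ _ => hv.1 _), ?_⟩
  rw [← dotProduct_one, symmetrize_dotProduct v fun _ _ => rfl, dotProduct_one, hv.2]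

lemma isSymmetricDesign_symmetrize (v : TrtSeq p t → ℝ) :
    IsSymmetricDesign (symmetrize v) := by
  intro σ s
  simp only [symmetrize, permDesign]
  congr 1
  refine Fintype.sum_equiv (Equiv.mulLeft σ⁻¹) _ _ fun ρ => ?_
  rw [Equiv.coe_mulLeft, _root_.mul_inv_rev, inv_inv]
  rfl

end Relabelling

section FirstOrderCondition

open Filter Topology

/- Bernoulli's inequality linearises the power, so no derivative is needed. -/
lemma add_nonpos_of_eventually_pow_mul_le_one {m : ℕ} {u l : ℝ} {f : ℝ → ℝ}
    (hf : Tendsto f (𝓝[>] 0) (𝓝 l))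
    (hle : ∀ᶠ e in 𝓝[>] (0 : ℝ), (1 + e * u) ^ m * (1 + e * f e) ≤ 1) :
    m * u + l ≤ 0 := by
  have hid : Tendsto (fun e : ℝ => e) (𝓝[>] 0) (𝓝 0) := tendsto_id.mono_left nhdsWithin_le_nhds
  have hlim : Tendsto (fun e => m * u + f e + e * (m * u * f e)) (𝓝[>] 0) (𝓝 (m * u + l)) := by
    simpa using (hf.const_add (m * u)).add (hid.mul (hf.const_mul (m * u)))
  have heu : ∀ᶠ e in 𝓝[>] (0 : ℝ), -2 < e * u :=
    (hid.mul_const u).eventually_const_lt (by simp)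
  have hef : ∀ᶠ e in 𝓝[>] (0 : ℝ), -1 < e * f e :=
    (hid.mul hf).eventually_const_lt (by simp)
  refine le_of_tendsto hlim ?_
  filter_upwards [hle, heu, hef, self_mem_nhdsWithin] with e he heu hef hpos
  have hbernoulli := mul_le_mul_of_nonneg_right (one_add_mul_le_pow heu.le m)
    (by linarith : 0 ≤ 1 + e * f e)
  refine nonpos_of_mul_nonpos_right ?_ (Set.mem_Ioi.1 hpos)
  linarith

variable {p t n : ℕ} {S : Matrix (Fin p) (Fin p) ℝ} {w v : TrtSeq p t → ℝ}
  {g : Measure (Fin t → ℝ)} {l0 : ℝ}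

/-- The sensitivity function of the `D`-criterion at the design `w`: its mean under a pseudo
symmetric design `v` exceeds `1` by a multiple of the directional derivative from `w` to `v`. -/
def sensitivity (n : ℕ) (S : Matrix (Fin p) (Fin p) ℝ) (w : TrtSeq p t → ℝ) (l0 : ℝ)
    (s : TrtSeq p t) : ℝ :=
  (1 / ((t : ℝ) - 1)) * (qSeq S s (xD n S w) / qD S w (xD n S w)) +
    (((t : ℝ) - 2) / ((t : ℝ) - 1)) * (qSeq S s l0 / qD S w l0)

lemma sensitivity_permSeq (n : ℕ) (S : Matrix (Fin p) (Fin p) ℝ) (w : TrtSeq p t → ℝ) (l0 : ℝ)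
    (σ : Equiv.Perm (Fin t)) (s : TrtSeq p t) :
    sensitivity n S w l0 (permSeq σ s) = sensitivity n S w l0 s := by
  simp only [sensitivity, qSeq_permSeq]

lemma dotProduct_sensitivity (n : ℕ) (S : Matrix (Fin p) (Fin p) ℝ) (w v : TrtSeq p t → ℝ)
    (l0 : ℝ) :
    v ⬝ᵥ sensitivity n S w l0 =
      (qD S v (xD n S w) / qD S w (xD n S w) + (t - 2) * (qD S v l0 / qD S w l0)) / (t - 1) := by
  have hterm (s) : v s * sensitivity n S w l0 s =
      v s * qSeq S s (xD n S w) / qD S w (xD n S w) / (t - 1) +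
        v s * qSeq S s l0 / qD S w l0 * ((t - 2) / (t - 1)) := by
    rw [sensitivity]
    ring
  simp only [dotProduct, hterm, Finset.sum_add_distrib, ← Finset.sum_div, ← Finset.sum_mul, qD]
  ring

lemma dotProduct_sensitivity_self (ht : 2 ≤ t) (hB : qD S w (xD n S w) ≠ 0)
    (hA : qD S w l0 ≠ 0) : w ⬝ᵥ sensitivity n S w l0 = 1 := by
  have ht1 := (natCast_sub_one_pos ht).ne'
  rw [dotProduct_sensitivity, div_self hB, div_self hA]
  field_simp
  ring

lemma tendsto_xD_convexComb (hc : cD n S w 1 1 ≠ 0) (v : TrtSeq p t → ℝ) :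
    Tendsto (fun e : ℝ => xD n S ((1 - e) • w + e • v)) (𝓝 0) (𝓝 (xD n S w)) := by
  have hcont (i j : Fin 2) : Tendsto (fun e : ℝ => cD n S ((1 - e) • w + e • v) i j) (𝓝 0)
      (𝓝 (cD n S w i j)) := by
    simp only [cD_convexComb]
    exact Continuous.tendsto' (by fun_prop) _ _ (by simp)
  exact (hcont 0 1).neg.div (hcont 1 1) hc

lemma continuous_qD (S : Matrix (Fin p) (Fin p) ℝ) (w : TrtSeq p t → ℝ) :
    Continuous (qD S w) := by
  unfold qD qSeq
  fun_prop

lemma le_qD_convexComb (hc : 0 < cD n S w 1 1) (v : TrtSeq p t → ℝ) {e : ℝ} (he : e ≤ 1)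
    (x : ℝ) :
    (1 - e) * qD S w (xD n S w) + e * qD S v x ≤ qD S ((1 - e) • w + e • v) x := by
  rw [qD_convexComb]
  have := sub_nonneg.2 he
  gcongr
  exact qD_xD_le hc x

namespace IsPseudoSymmetric

lemma phiCrit_pow (ht : 2 ≤ t) (hS : S.PosDef) (hg : IsExchangeablePrior g)
    (hdes : IsDesign w) (hw : IsPseudoSymmetric n S w) (hc : 0 < cD n S w 1 1)
    (hq : qD S w l0 ≠ 0) :
    PhiCrit n S PhiD g l0 w ^ (t - 1) =
      (n / (t - 1) : ℝ) ^ (t - 1) * (qD S w l0 ^ (t - 2) * qD S w (xD n S w)) := by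
  have hρ : 0 ≤ qD S w (xD n S w) / qD S w l0 :=
    div_nonneg (qD_nonneg hS hdes _) (qD_nonneg hS hdes _)
  rw [hw.phiCrit_eq ht hS hg hdes hc hq, mul_pow, ← Nat.cast_pred (by omega),
    Real.rpow_inv_natCast_pow hρ (by omega), mul_div_right_comm, mul_pow]
  obtain ⟨m, rfl⟩ := Nat.exists_eq_add_of_le' ht
  rw [show m + 2 - 1 = m + 1 from rfl, show m + 2 - 2 = m from rfl, pow_succ (qD S w l0)]
  field_simp

lemma qD_pow_mul_qD_xD_le (ht : 2 ≤ t) (hS : S.PosDef) (hg : IsExchangeablePrior g)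
    (hdes : IsDesign w) (hw : IsPseudoSymmetric n S w) (hc : 0 < cD n S w 1 1)
    (hq : qD S w l0 ≠ 0) (hopt : PhiOptimal n S PhiD g l0 w)
    (hvdes : IsDesign v) (hv : IsPseudoSymmetric n S v) (hcv : 0 < cD n S v 1 1)
    (hqv : qD S v l0 ≠ 0) :
    qD S v l0 ^ (t - 2) * qD S v (xD n S v) ≤ qD S w l0 ^ (t - 2) * qD S w (xD n S w) := by
  have ht1 := natCast_sub_one_pos ht
  have hn := natCast_pos_of_cD_pos hc
  have hcrit0 : 0 ≤ PhiCrit n S PhiD g l0 v := by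
    have := qD_nonneg hS hvdes l0
    have := qD_nonneg hS hvdes (xD n S v)
    rw [hv.phiCrit_eq ht hS hg hvdes hcv hqv]
    positivity
  have hpow := pow_le_pow_left₀ hcrit0 (hopt v (hv.phiAdmissible ht hS hg hvdes hcv hqv)) (t - 1)
  rw [hw.phiCrit_pow ht hS hg hdes hc hq, hv.phiCrit_pow ht hS hg hvdes hcv hqv] at hpow
  exact le_of_mul_le_mul_left hpow (by positivity)

/- Fixing the minimiser `xD` of the mixture bounds its criterion below by a function whose one-sided
derivative at `e = 0` is explicit. -/
lemma dotProduct_sensitivity_le_one (ht : 2 ≤ t) (hS : S.PosDef) (hg : IsExchangeablePrior g)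
    (hdes : IsDesign w) (hw : IsPseudoSymmetric n S w) (hc : 0 < cD n S w 1 1)
    (hB : 0 < qD S w (xD n S w)) (hopt : PhiOptimal n S PhiD g l0 w)
    (hvdes : IsDesign v) (hv : IsPseudoSymmetric n S v) :
    v ⬝ᵥ sensitivity n S w l0 ≤ 1 := by
  have ht1 := natCast_sub_one_pos ht
  have hA : 0 < qD S w l0 := hB.trans_le (qD_xD_le hc l0)
  set A := qD S w l0
  set B := qD S w (xD n S w)
  set mix : ℝ → TrtSeq p t → ℝ := fun e => (1 - e) • w + e • v
  have hlim : Tendsto (fun e => qD S v (xD n S (mix e)) / B - 1) (𝓝[>] 0)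
      (𝓝 (qD S v (xD n S w) / B - 1)) :=
    ((((continuous_qD S v).tendsto _).comp (tendsto_xD_convexComb hc.ne' v)).div_const B
      |>.sub_const 1).mono_left nhdsWithin_le_nhds
  have hle : ∀ᶠ e in 𝓝[>] (0 : ℝ), (1 + e * (qD S v l0 / A - 1)) ^ (t - 2) *
      (1 + e * (qD S v (xD n S (mix e)) / B - 1)) ≤ 1 := by
    filter_upwards [Ioo_mem_nhdsGT one_pos] with e ⟨he0, he1⟩
    have hpos {a b : ℝ} (ha : 0 < a) (hb : 0 ≤ b) : 0 < (1 - e) * a + e * b :=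
      add_pos_of_pos_of_nonneg (mul_pos (sub_pos.2 he1) ha) (mul_nonneg he0.le hb)
    have hcmix : 0 < cD n S (mix e) 1 1 := by
      rw [cD_convexComb]
      exact hpos hc (cD_self_nonneg hS n hvdes 1)
    have hAmix0 : 0 < qD S (mix e) l0 := by
      rw [qD_convexComb]
      exact hpos hA (qD_nonneg hS hvdes l0)
    have hAmix : qD S (mix e) l0 = A * (1 + e * (qD S v l0 / A - 1)) := by
      rw [qD_convexComb]
      field_simp
      ring
    have hBmix : B * (1 + e * (qD S v (xD n S (mix e)) / B - 1)) ≤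
        qD S (mix e) (xD n S (mix e)) := by
      refine (le_qD_convexComb hc v he1.le _).trans_eq' ?_
      field_simp
      ring
    have hcrit := hw.qD_pow_mul_qD_xD_le ht hS hg hdes hc hA.ne' hopt
      (isDesign_convexComb hdes hvdes ⟨he0.le, he1.le⟩) (hw.convexComb hv e) hcmix hAmix0.ne'
    refine le_of_mul_le_mul_left ?_ (mul_pos (pow_pos hA (t - 2)) hB)
    calc _ = qD S (mix e) l0 ^ (t - 2) * (B * (1 + e * (qD S v (xD n S (mix e)) / B - 1))) := by
          rw [hAmix, mul_pow]
          ring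
      _ ≤ qD S (mix e) l0 ^ (t - 2) * qD S (mix e) (xD n S (mix e)) := by gcongr
      _ ≤ _ := by rwa [mul_one]
  have hfirst := add_nonpos_of_eventually_pow_mul_le_one hlim hle
  rw [Nat.cast_sub ht, Nat.cast_two] at hfirst
  rw [dotProduct_sensitivity, div_le_one ht1]
  linarith

lemma sensitivity_le_one (ht : 2 ≤ t) (hS : S.PosDef) (hg : IsExchangeablePrior g)
    (hdes : IsDesign w) (hw : IsPseudoSymmetric n S w) (hc : 0 < cD n S w 1 1)
    (hB : 0 < qD S w (xD n S w)) (hopt : PhiOptimal n S PhiD g l0 w) (s : TrtSeq p t) :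
    sensitivity n S w l0 s ≤ 1 := by
  have hsymm := isDesign_symmetrize (single_mem_stdSimplex ℝ s)
  have hle := hw.dotProduct_sensitivity_le_one ht hS hg hdes hc hB hopt hsymm
    ((isSymmetricDesign_symmetrize _).isPseudoSymmetric ht hsymm n S)
  rwa [symmetrize_dotProduct _ (sensitivity_permSeq n S w l0), single_one_dotProduct] at hle

lemma phiCrit_le_dotProduct_sensitivity_mul (ht : 2 ≤ t) (hS : S.PosDef)
    (hg : IsExchangeablePrior g) (hdes : IsDesign w) (hw : IsPseudoSymmetric n S w)
    (hc : 0 < cD n S w 1 1) (hB : 0 < qD S w (xD n S w)) (hv : PhiAdmissible n S PhiD g l0 v) :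
    PhiCrit n S PhiD g l0 v ≤ (v ⬝ᵥ sensitivity n S w l0) * PhiCrit n S PhiD g l0 w := by
  have ht1 := natCast_sub_one_pos ht
  have hA : 0 < qD S w l0 := hB.trans_le (qD_xD_le hc l0)
  set r := qD S w l0 / qD S w (xD n S w) with hr
  have hr0 : 0 < r := div_pos hA hB
  have hcrit : r ^ ((t : ℝ) - 1)⁻¹ * PhiCrit n S PhiD g l0 w = n * qD S w l0 / (t - 1) := by
    rw [hw.phiCrit_eq ht hS hg hdes hc hA.ne', mul_left_comm, ← inv_div (qD S w l0), ← hr,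
      ← Real.mul_rpow hr0.le (inv_nonneg.2 hr0.le), mul_inv_cancel₀ hr0.ne', Real.one_rpow,
      mul_one]
  refine le_of_mul_le_mul_left ?_ (Real.rpow_pos_of_pos hr0 ((t : ℝ) - 1)⁻¹)
  rw [mul_left_comm, hcrit, dotProduct_sensitivity]
  refine (rpow_mul_phiCrit_le ht hS hg hv (xD n S w) hr0.le).trans_eq ?_
  rw [hr]
  field_simp
  ring

lemma phiOptimal_of_sensitivity_le_one (ht : 2 ≤ t) (hS : S.PosDef)
    (hg : IsExchangeablePrior g) (hdes : IsDesign w) (hw : IsPseudoSymmetric n S w)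
    (hc : 0 < cD n S w 1 1) (hB : 0 < qD S w (xD n S w))
    (hle : ∀ s, sensitivity n S w l0 s ≤ 1) : PhiOptimal n S PhiD g l0 w := by
  intro v hv
  have hmean : v ⬝ᵥ sensitivity n S w l0 ≤ 1 := by
    rw [← hv.1.2, ← dotProduct_one]
    exact dotProduct_le_dotProduct_of_nonneg_left hle hv.1.1
  refine (hw.phiCrit_le_dotProduct_sensitivity_mul ht hS hg hdes hc hB hv).trans
    (mul_le_of_le_one_left ?_ hmean)
  have := qD_nonneg hS hdes l0
  have := natCast_sub_one_pos ht
  rw [hw.phiCrit_eq ht hS hg hdes hc (hB.trans_le (qD_xD_le hc l0)).ne']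
  positivity

end IsPseudoSymmetric

end FirstOrderCondition

section WeightedMeans

variable {ι : Type*} [Fintype ι] {w f : ι → ℝ} {c : ℝ}

lemma sSup_range_eq_iff_forall_le (hw : w ∈ stdSimplex ℝ ι) (hwf : w ⬝ᵥ f = c) :
    sSup (Set.range f) = c ↔ ∀ i, f i ≤ c := by
  have hle (i) : f i ≤ sSup (Set.range f) := le_csSup (Set.finite_range f).bddAbove ⟨i, rfl⟩
  refine ⟨fun h i => h ▸ hle i, fun h => le_antisymm ?_ ?_⟩
  · have : Nonempty ι := Finset.univ_nonempty_iff.1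
      (Finset.nonempty_of_sum_ne_zero (hw.2.trans_ne one_ne_zero))
    exact ciSup_le h
  · calc c = ∑ i, w i * f i := hwf.symm
      _ ≤ ∑ i, w i * sSup (Set.range f) :=
        Finset.sum_le_sum fun i _ => mul_le_mul_of_nonneg_left (hle i) (hw.1 i)
      _ = sSup (Set.range f) := by rw [← Finset.sum_mul, hw.2, one_mul]

lemma eq_of_forall_le_of_dotProduct_eq (hw : w ∈ stdSimplex ℝ ι) (hwf : w ⬝ᵥ f = c)
    (hle : ∀ i, f i ≤ c) {i : ι} (hi : 0 < w i) : f i = c := by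
  have hgap : ∑ j, w j * (c - f j) = 0 := by
    simp only [mul_sub, Finset.sum_sub_distrib, ← Finset.sum_mul, hw.2, one_mul]
    exact sub_eq_zero.2 hwf.symm
  have hzero := (Finset.sum_eq_zero_iff_of_nonneg fun j _ =>
    mul_nonneg (hw.1 j) (sub_nonneg.2 (hle j))).1 hgap i (Finset.mem_univ i)
  exact (sub_eq_zero.1 ((mul_eq_zero.1 hzero).resolve_left hi.ne')).symm

end WeightedMeans

theorem stmt12_general (p t n : ℕ) (ht : 2 ≤ t)
    (S : Matrix (Fin p) (Fin p) ℝ) (hS : S.PosDef)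
    (l0 : ℝ) (g : Measure (Fin t → ℝ)) (hg : IsExchangeablePrior g)
    (w : TrtSeq p t → ℝ) (hw : IsDesign w) (hps : IsPseudoSymmetric n S w)
    (hc22 : 0 < cD n S w 1 1) (hq1 : 0 < qD S w (xD n S w)) :
    (PhiOptimal n S PhiD g l0 w ↔
      sSup (Set.range fun s : TrtSeq p t =>
        (1 / ((t : ℝ) - 1)) * (qSeq S s (xD n S w) / qD S w (xD n S w)) +
          (((t : ℝ) - 2) / ((t : ℝ) - 1)) * (qSeq S s l0 / qD S w l0)) = 1) ∧
    (PhiOptimal n S PhiD g l0 w → ∀ s : TrtSeq p t, 0 < w s →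
      (1 / ((t : ℝ) - 1)) * (qSeq S s (xD n S w) / qD S w (xD n S w)) +
        (((t : ℝ) - 2) / ((t : ℝ) - 1)) * (qSeq S s l0 / qD S w l0) = 1) := by
  have hmean : w ⬝ᵥ sensitivity n S w l0 = 1 :=
    dotProduct_sensitivity_self ht hq1.ne' (hq1.trans_le (qD_xD_le hc22 l0)).ne'
  have hiff : PhiOptimal n S PhiD g l0 w ↔ ∀ s, sensitivity n S w l0 s ≤ 1 :=
    ⟨hps.sensitivity_le_one ht hS hg hw hc22 hq1,
      hps.phiOptimal_of_sensitivity_le_one ht hS hg hw hc22 hq1⟩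
  exact ⟨hiff.trans (sSup_range_eq_iff_forall_le hw hmean).symm,
    fun hopt s hs => eq_of_forall_le_of_dotProduct_eq hw hmean (hiff.1 hopt) hs⟩

/-- equivalence theorem for the D-criterion. -/
theorem stmt12 (p t n : ℕ) (hp : 2 ≤ p) (ht : 3 ≤ t) (hn : 1 ≤ n)
    (S : Matrix (Fin p) (Fin p) ℝ) (hS : S.PosDef)
    (l0 : ℝ) (g : Measure (Fin t → ℝ)) (hg : IsExchangeablePrior g)
    (w : TrtSeq p t → ℝ) (hw : IsDesign w) (hps : IsPseudoSymmetric n S w)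
    (hc22 : 0 < cD n S w 1 1)
    (hq1 : 0 < qD S w (xD n S w)) (hq2 : 0 < qD S w l0) :
    (PhiOptimal n S PhiD g l0 w ↔
      sSup (Set.range fun s : TrtSeq p t =>
        (1 / ((t : ℝ) - 1)) * (qSeq S s (xD n S w) / qD S w (xD n S w)) +
          (((t : ℝ) - 2) / ((t : ℝ) - 1)) * (qSeq S s l0 / qD S w l0)) = 1) ∧
    (PhiOptimal n S PhiD g l0 w → ∀ s : TrtSeq p t, 0 < w s →
      (1 / ((t : ℝ) - 1)) * (qSeq S s (xD n S w) / qD S w (xD n S w)) +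
        (((t : ℝ) - 2) / ((t : ℝ) - 1)) * (qSeq S s l0 / qD S w l0) = 1) :=
  stmt12_general p t n (by omega) S hS l0 g hg w hw hps hc22 hq1
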